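/- Let q > 1 be an odd squarefree integer with exactly k distinct prime factors. If the smallest prime factor of q is greater than 2^k, then the Erdős conjecture is true mod q. -/

import Mathlib

open Filter Topology Finset

/-- `f : ℕ → ℤ` is Erdősian mod `q`: periodic with period `q`, takes values `±1`
off multiples of `q`, and `0` on multiples of `q`. -/
def IsErdosian (q : ℕ) (f : ℕ → ℤ) : Prop :=
  (∀ n : ℕ, 1 ≤ n → f (n + q) = f n) ∧
  (∀ n : ℕ, 1 ≤ n → ¬ q ∣ n → f n = 1 ∨ f n = -1) ∧
  (∀ n : ℕ, 1 ≤ n → q ∣ n → f n = 0)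

/-- The Erdős conjecture is false mod `q`: there is an Erdősian function mod `q`
whose partial sums `∑_{n=1}^N f(n)/n` tend to `0`. -/
def ErdosConjectureFalse (q : ℕ) : Prop :=
  ∃ f : ℕ → ℤ, IsErdosian q f ∧
    Tendsto (fun N : ℕ => ∑ n ∈ Finset.Icc 1 N, (f n : ℝ) / n) atTop (nhds 0)

/-- The Erdős conjecture holds (is true) mod `q`. -/
def ErdosConjectureHolds (q : ℕ) : Prop := ¬ ErdosConjectureFalse q



lemma bk_factor (M : Multiset ℂ) : ∀ g : ℂ → ℂ, Differentiable ℂ g →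
    (∀ z, (M.count z : ℕ∞) ≤ analyticOrderAt g z) →
    ∃ h : ℂ → ℂ, Differentiable ℂ h ∧ ∀ z, g z = (M.map (fun w => z - w)).prod * h z := by
  induction M using Multiset.induction_on with
  | empty => intro g hg _; exact ⟨g, hg, by simp⟩
  | cons w M ih =>
    intro g hg ho
    have hgw : g w = 0 := by
      by_contra hne
      have := ho w
      rw [(hg.analyticAt w).analyticOrderAt_eq_zero.mpr hne] at this
      simp at this
    have hd : Differentiable ℂ (dslope g w) := by
      rw [← differentiableOn_univ, Complex.differentiableOn_dslope univ_mem]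
      exact hg.differentiableOn
    have hfac : ∀ z, g z = (z - w) * dslope g w z := by
      intro z
      have := sub_smul_dslope g w z
      simp [hgw] at this
      exact this.symm
    obtain ⟨h, hh, hh2⟩ := ih (dslope g w) hd (by
      intro z
      have h1 : analyticOrderAt g z = analyticOrderAt (fun z => z - w) z
          + analyticOrderAt (dslope g w) z := by
        rw [← analyticOrderAt_mul (by fun_prop) (hd.analyticAt z)]
        congr 1
        ext z; exact hfac z
      have h2 := ho z
      rw [h1] at h2
      by_cases hz : z = w
      · subst hz
        have h3 : analyticOrderAt (fun y => y - z) z = 1 := by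
          have : (1 : ℕ∞) = ((1 : ℕ) : ℕ∞) := rfl
          rw [this, AnalyticAt.analyticOrderAt_eq_natCast (by fun_prop)]
          exact ⟨fun _ => 1, by fun_prop, by simp, by simp⟩
        rw [h3, Multiset.count_cons_self, add_comm, Nat.cast_add, Nat.cast_one] at h2
        exact (ENat.add_le_add_iff_left ENat.one_ne_top).mp (by simpa only [add_comm] using h2)
      · have h3 : analyticOrderAt (fun y => y - w) z = 0 := by
          rw [AnalyticAt.analyticOrderAt_eq_zero (by fun_prop)]
          exact sub_ne_zero.mpr hz
        rw [h3, zero_add, Multiset.count_cons_of_ne hz] at h2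
        exact h2)
    refine ⟨h, hh, fun z => ?_⟩
    rw [hfac, hh2]; simp [mul_assoc]

/-- Schwarz lemma. -/
lemma bk_schwarz (g : ℂ → ℂ) (hg : Differentiable ℂ g) (s N N' : ℕ) (hN' : 0 < N') (hNN : N ≤ N')
    (hz : ∀ k < N, ∀ i < s, iteratedDeriv i g (k : ℂ) = 0) (B : ℝ)
    (hB : ∀ z : ℂ, ‖z‖ ≤ 3 * N' → ‖g z‖ ≤ B) (t : ℕ) (ht : t < N') :
    ‖g t‖ * 2 ^ (s * N) ≤ B := by
  set M : Multiset ℂ := ∑ k ∈ range N, Multiset.replicate s (k : ℂ) with hM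
  have hprod : ∀ z : ℂ, (M.map (fun w => z - w)).prod = ∏ k ∈ range N, (z - k) ^ s := by
    intro z
    rw [hM, ← Multiset.coe_mapAddMonoidHom, map_sum, Multiset.prod_sum]
    simp
  obtain ⟨h, hh, hfac⟩ := bk_factor M g hg (by
    intro z
    rw [hM, Multiset.count_sum']
    simp only [Multiset.count_replicate]
    by_cases hk : ∃ k < N, (k : ℂ) = z
    · obtain ⟨k, hk, rfl⟩ := hk
      have : (∑ x ∈ range N, if (x : ℂ) = (k : ℂ) then s else 0) = s := by
        simp [Nat.cast_inj, hk]
      rw [this, natCast_le_analyticOrderAt_iff_iteratedDeriv_eq_zero (hg.analyticAt _)]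
      exact hz k hk
    · push Not at hk
      rw [Finset.sum_eq_zero]
      · simp
      · intro x hx
        rw [if_neg (hk x (by simpa using hx))])
  simp only [hprod] at hfac
  have hN0 : (0:ℝ) < N' := by exact_mod_cast hN'
  set C : ℝ := B / (2 * N') ^ (s * N)
  have hC : ∀ z ∈ frontier (Metric.ball (0:ℂ) (3 * N')), ‖h z‖ ≤ C := by
    intro z hz'
    rw [frontier_ball _ (by positivity)] at hz'
    have hz1 : ‖z‖ = 3 * N' := by simpa using hz'
    have := hB z hz1.le
    rw [hfac, norm_mul] at this
    rw [le_div_iff₀ (by positivity), mul_comm]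
    refine le_trans ?_ this
    gcongr
    rw [norm_prod, mul_comm s N, pow_mul', ← Finset.card_range N, ← Finset.prod_const,
      Finset.card_range]
    refine Finset.prod_le_prod (fun _ _ => by positivity) ?_
    intro k hk
    rw [norm_pow]
    gcongr
    have h1 : (k : ℝ) ≤ N' := by exact_mod_cast (Finset.mem_range.mp hk).le.trans hNN
    have h2 := norm_sub_norm_le z (k : ℂ)
    rw [hz1, Complex.norm_natCast] at h2
    linarith
  have hmem : (t : ℂ) ∈ closure (Metric.ball (0:ℂ) (3 * N')) := by
    apply subset_closure
    have : (t : ℝ) < N' := by exact_mod_cast ht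
    simp only [Metric.mem_ball, dist_zero_right, Complex.norm_natCast]
    linarith
  have h1 := Complex.norm_le_of_forall_mem_frontier_norm_le Metric.isBounded_ball
    hh.diffContOnCl hC hmem
  have h2 : ‖∏ k ∈ range N, ((t:ℂ) - k) ^ s‖ ≤ (N':ℝ) ^ (s * N) := by
    rw [norm_prod, mul_comm s N, pow_mul', ← Finset.card_range N, ← Finset.prod_const,
      Finset.card_range]
    refine Finset.prod_le_prod (fun _ _ => by positivity) ?_
    intro k hk
    rw [norm_pow]
    gcongr
    have : (t : ℂ) - k = ((t - k : ℝ) : ℂ) := by push_cast; rfl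
    rw [this, Complex.norm_real, Real.norm_eq_abs, abs_le]
    have h1 : (k : ℝ) ≤ N' := by exact_mod_cast (Finset.mem_range.mp hk).le.trans hNN
    have h2 : (t : ℝ) ≤ N' := by exact_mod_cast ht.le
    have h3 : (0 : ℝ) ≤ k := by positivity
    have h4 : (0 : ℝ) ≤ t := by positivity
    constructor <;> linarith
  rw [hfac, norm_mul]
  calc _ ≤ (N':ℝ) ^ (s * N) * C * 2 ^ (s * N) := by gcongr
    _ = B := by
      simp only [C]
      rw [mul_pow]; field_simp


lemma bk_siegel0 (K : Type) [Field K] [NumberField K] : ∃ c : ℝ, ∀ (α β : Type) [Fintype α]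
    [Fintype β] (a : Matrix α β (NumberField.RingOfIntegers K)), a ≠ 0 → ∀ (p q : ℕ), 0 < p → p < q → 
    Fintype.card β = q → ∀ A : ℝ, 
    (∀ k l, NumberField.house ((algebraMap (NumberField.RingOfIntegers K) K) (a k l)) ≤ A) → 
    Fintype.card α = p → 
    ∃ ξ : β → NumberField.RingOfIntegers K, ξ ≠ 0 ∧ a.mulVec ξ = 0 ∧
      ∀ l, NumberField.house (ξ l : K) ≤ c * (c * q * A) ^ ((p : ℝ) / (q - p)) := by
  classical
  exact ⟨_, fun α β _ _ a ha p q hp hpq hβ A hA hα =>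
    NumberField.house.exists_ne_zero_int_vec_house_le K a ha hp hpq hβ hA hα⟩

lemma bk_siegel (K : Type) [Field K] [NumberField K] : ∃ c : ℝ, 1 ≤ c ∧ ∀ (α β : Type) [Fintype α]
    [Fintype β] (a : Matrix α β (NumberField.RingOfIntegers K)), a ≠ 0 → 0 < Fintype.card α → 
    2 * Fintype.card α ≤ Fintype.card β → ∀ A : ℝ, 1 ≤ A → 
    (∀ k l, NumberField.house ((algebraMap (NumberField.RingOfIntegers K) K) (a k l)) ≤ A) → 
    ∃ ξ : β → NumberField.RingOfIntegers K, ξ ≠ 0 ∧ a.mulVec ξ = 0 ∧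
      ∀ l, NumberField.house (ξ l : K) ≤ c * (c * Fintype.card β * A) := by
  obtain ⟨c, hc⟩ := bk_siegel0 K
  refine ⟨max 1 |c|, le_max_left _ _, ?_⟩
  intro α β _ _ a ha h0 h2 A hA habs
  obtain ⟨ξ, h1, h3, h4⟩ := hc α β a ha _ _ h0 (by omega) rfl A habs rfl
  refine ⟨ξ, h1, h3, fun l => (h4 l).trans ?_⟩
  set p := Fintype.card α
  set q := Fintype.card β
  have hp : (0:ℝ) < p := by exact_mod_cast h0
  have hpq : (2:ℝ) * p ≤ q := by exact_mod_cast h2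
  have hq1 : (1:ℝ) ≤ q := by
    have : 1 ≤ q := by omega
    exact_mod_cast this
  have he1 : (p : ℝ) / (q - p) ≤ 1 := by
    rw [div_le_one (by linarith)]; linarith
  have he0 : 0 ≤ (p : ℝ) / (q - p) := div_nonneg hp.le (by linarith)
  set e := (p : ℝ) / (q - p)
  have hm : |c| ≤ max 1 |c| := le_max_right _ _
  have hm1 : 1 ≤ max 1 |c| := le_max_left _ _
  set m := max 1 |c|
  calc c * (c * q * A) ^ e ≤ |c * (c * q * A) ^ e| := le_abs_self _
    _ = |c| * |(c * q * A) ^ e| := abs_mul _ _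
    _ ≤ |c| * |c * q * A| ^ e := by gcongr; exact Real.abs_rpow_le_abs_rpow _ _
    _ = |c| * (|c| * q * A) ^ e := by
        rw [abs_mul, abs_mul, abs_of_nonneg (by linarith : (0:ℝ) ≤ q),
          abs_of_nonneg (by linarith : (0:ℝ) ≤ A)]
    _ ≤ m * (m * q * A) ^ e := by gcongr
    _ ≤ m * (m * q * A) ^ (1:ℝ) := by
        gcongr
        have : 1 ≤ m * q := one_le_mul_of_one_le_of_one_le hm1 hq1
        exact one_le_mul_of_one_le_of_one_le this hA
    _ = _ := by rw [Real.rpow_one]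

lemma bk_liouville {K : Type} [Field K] [NumberField K] (σ : K →+* ℂ) (x : K) (hx : IsIntegral ℤ x)
    (h0 : x ≠ 0) (H : ℝ) (hH : NumberField.house x ≤ H) :
    1 ≤ ‖σ x‖ * H ^ (Module.finrank ℚ K - 1) := by
  have h1 := NumberField.norm_norm_le_norm_mul_house_pow x σ
  have h2 : (1:ℝ) ≤ ‖Algebra.norm ℚ x‖ := by
    have hi : IsIntegral ℤ (Algebra.norm ℚ x) := Algebra.isIntegral_norm ℚ hx
    obtain ⟨n, hn⟩ := IsIntegrallyClosed.isIntegral_iff.mp hi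
    have hne : Algebra.norm ℚ x ≠ 0 := Algebra.norm_ne_zero_iff.mpr h0
    rw [← hn] at hne ⊢
    have : n ≠ 0 := by rintro rfl; simp at hne
    have h3 : 1 ≤ |n| := Int.one_le_abs this
    simp only [algebraMap_int_eq, eq_intCast, Int.norm_cast_rat, Int.norm_eq_abs]
    exact_mod_cast h3
  refine h2.trans (h1.trans ?_)
  gcongr
  exact NumberField.house_nonneg x


lemma bk_sep {K A : Type} [Field K] [Fintype A] [DecidableEq A] [DecidableEq K] (p c e : A → K) (a0 : A)
    (L M : ℕ)
    (hM : Fintype.card A ≤ M) (hL : (univ.filter (fun a => a ≠ a0 ∧ e a = e a0)).card < L)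
    (hc : ∀ a, a ≠ a0 → e a = e a0 → c a ≠ c a0)
    (H : ∀ j < L, ∀ l < M, ∑ a, p a * (c a ^ j * e a ^ l) = 0) : p a0 = 0 := by
  set Q : Polynomial K := ∏ a ∈ univ.filter (fun a => a ≠ a0 ∧ e a = e a0),
    (Polynomial.X - Polynomial.C (c a)) with hQ
  set R : Polynomial K := ∏ y ∈ (univ.image e).erase (e a0),
    (Polynomial.X - Polynomial.C y) with hR
  have hQd : Q.natDegree < L := by
    rw [hQ, Polynomial.natDegree_finsetProd_X_sub_C_eq_card]; exact hL
  have hRd : R.natDegree < M := by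
    rw [hR, Polynomial.natDegree_finsetProd_X_sub_C_eq_card]
    refine lt_of_lt_of_le (Finset.card_erase_lt_of_mem (by simp)) (Finset.card_image_le.trans ?_)
    simpa using hM
  have key : ∑ a, p a * (Q.eval (c a) * R.eval (e a)) = 0 := by
    have : ∀ a, p a * (Q.eval (c a) * R.eval (e a)) = ∑ j ∈ range (Q.natDegree + 1),
        ∑ l ∈ range (R.natDegree + 1), Q.coeff j * R.coeff l * (p a * (c a ^ j * e a ^ l)) := by
      intro a
      rw [Polynomial.eval_eq_sum_range, Polynomial.eval_eq_sum_range, Finset.sum_mul_sum,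
        Finset.mul_sum]
      refine Finset.sum_congr rfl fun j _ => ?_
      rw [Finset.mul_sum]
      refine Finset.sum_congr rfl fun l _ => ?_
      ring
    simp_rw [this]
    rw [Finset.sum_comm]
    refine Finset.sum_eq_zero fun j hj => ?_
    rw [Finset.sum_comm]
    refine Finset.sum_eq_zero fun l hl => ?_
    rw [← Finset.mul_sum, H j (by simp at hj; omega) l (by simp at hl; omega), mul_zero]
  rw [Finset.sum_eq_single a0] at key
  · have hQ0 : Q.eval (c a0) ≠ 0 := by
      rw [hQ, Polynomial.eval_prod, Finset.prod_ne_zero_iff]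
      intro a ha
      simp only [mem_filter, mem_univ, true_and] at ha
      simp only [Polynomial.eval_sub, Polynomial.eval_X, Polynomial.eval_C]
      exact sub_ne_zero.mpr (hc a ha.1 ha.2).symm
    have hR0 : R.eval (e a0) ≠ 0 := by
      rw [hR, Polynomial.eval_prod, Finset.prod_ne_zero_iff]
      intro y hy
      simp only [Polynomial.eval_sub, Polynomial.eval_X, Polynomial.eval_C]
      exact sub_ne_zero.mpr (Finset.ne_of_mem_erase hy).symm
    exact (mul_eq_zero.mp key).resolve_right (mul_ne_zero hQ0 hR0)
  · intro a _ ha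
    by_cases hea : e a = e a0
    · have : Q.eval (c a) = 0 := by
        rw [hQ, Polynomial.eval_prod]
        exact Finset.prod_eq_zero (i := a) (by simp [ha, hea]) (by simp)
      simp [this]
    · have : R.eval (e a) = 0 := by
        rw [hR, Polynomial.eval_prod]
        exact Finset.prod_eq_zero (i := e a) (by simp [hea]) (by simp)
      simp [this]
  · simp

set_option linter.unusedSectionVars false
section defs
variable {K : Type} [Field K] [NumberField K] {ι : Type} [Fintype ι] [DecidableEq ι]

noncomputable def bkC (β : ι → K) {L : ℕ} (a : (ι → Fin L) × Fin L) (i : ι) : K :=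
  ((a.1 i : ℕ) : K) + ((a.2 : ℕ) : K) * β i

noncomputable def bkE (α : ι → K) (α0 : K) {L : ℕ} (a : (ι → Fin L) × Fin L) : K :=
  (∏ i, α i ^ (a.1 i : ℕ)) * α0 ^ (a.2 : ℕ)

noncomputable def bkTerm (α : ι → K) (α0 : K) (β : ι → K) {L : ℕ} (τ : ι → ℕ) (t : ℕ)
    (a : (ι → Fin L) × Fin L) : K :=
  (∏ i, bkC β a i ^ τ i) * (bkE α α0 a) ^ t

noncomputable def bkPhi (α : ι → K) (α0 : K) (β : ι → K) {L : ℕ} (p : (ι → Fin L) × Fin L → K)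
    (τ : ι → ℕ) (t : ℕ) : K := ∑ a, p a * bkTerm α α0 β τ t a

noncomputable def bkK (σ : K →+* ℂ) (β : ι → K) (lam : ι → ℂ) {L : ℕ} (a : (ι → Fin L) × Fin L) : ℂ :=
  ∑ i, σ (bkC β a i) * lam i

noncomputable def bkF (σ : K →+* ℂ) (β : ι → K) (lam : ι → ℂ) {L : ℕ} (p : (ι → Fin L) × Fin L → K)
    (τ : ι → ℕ) (z : ℂ) : ℂ :=
  ∑ a, σ (p a) * (∏ i, σ (bkC β a i) ^ τ i) * Complex.exp (bkK σ β lam a * z)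

variable (σ : K →+* ℂ) (α : ι → K) (α0 : K) (β : ι → K) (lam : ι → ℂ) {L : ℕ}

lemma bkK_eq (a : (ι → Fin L) × Fin L) :
    bkK σ β lam a = ∑ i, ((a.1 i : ℕ) : ℂ) * lam i + ((a.2 : ℕ) : ℂ) * ∑ i, σ (β i) * lam i := by
  unfold bkK bkC
  rw [Finset.mul_sum, ← Finset.sum_add_distrib]
  refine Finset.sum_congr rfl fun i _ => ?_
  simp; ring

lemma bk_exp (hα : ∀ i, Complex.exp (lam i) = σ (α i))
    (hα0 : Complex.exp (∑ i, σ (β i) * lam i) = σ α0) (a : (ι → Fin L) × Fin L) :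
    Complex.exp (bkK σ β lam a) = σ (bkE α α0 a) := by
  rw [bkK_eq, Complex.exp_add, Complex.exp_sum, Complex.exp_nat_mul, hα0]
  simp [bkE, Complex.exp_nat_mul, hα]

lemma bkF_nat (hα : ∀ i, Complex.exp (lam i) = σ (α i))
    (hα0 : Complex.exp (∑ i, σ (β i) * lam i) = σ α0) (p : (ι → Fin L) × Fin L → K)
    (τ : ι → ℕ) (t : ℕ) : bkF σ β lam p τ t = σ (bkPhi α α0 β p τ t) := by
  unfold bkF bkPhi bkTerm
  rw [map_sum]
  refine Finset.sum_congr rfl fun a _ => ?_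
  rw [mul_comm (bkK σ β lam a), Complex.exp_nat_mul, bk_exp σ α α0 β lam hα hα0]
  simp [mul_assoc]

lemma bkF_diff (p : (ι → Fin L) × Fin L → K) (τ : ι → ℕ) :
    Differentiable ℂ (bkF σ β lam p τ) := by
  unfold bkF; fun_prop

lemma bkF_deriv (p : (ι → Fin L) × Fin L → K) (τ : ι → ℕ) :
    deriv (bkF σ β lam p τ) = fun z => ∑ i, lam i * bkF σ β lam p (τ + Pi.single i 1) z := by
  ext z
  have h : HasDerivAt (bkF σ β lam p τ)
      (∑ a, σ (p a) * (∏ i, σ (bkC β a i) ^ τ i) *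
        (Complex.exp (bkK σ β lam a * z) * (bkK σ β lam a * 1))) z := by
    unfold bkF
    refine HasDerivAt.fun_sum fun a _ => ?_
    exact HasDerivAt.const_mul _ (((hasDerivAt_id z).const_mul _).cexp)
  rw [h.deriv]
  unfold bkF
  simp_rw [Finset.mul_sum]
  rw [Finset.sum_comm]
  refine Finset.sum_congr rfl fun a _ => ?_
  have h2 : ∀ i, (∏ j, σ (bkC β a j) ^ (τ + (Pi.single i 1 : ι → ℕ)) j) =
      (∏ j, σ (bkC β a j) ^ τ j) * σ (bkC β a i) := by
    intro i
    simp only [Pi.add_apply, pow_add, Finset.prod_mul_distrib]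
    congr 1
    rw [Finset.prod_eq_single i]
    · simp
    · intro j _ hj; simp [Pi.single_eq_of_ne hj]
    · simp
  simp_rw [h2]
  conv_lhs => rw [bkK]
  rw [mul_one, Finset.mul_sum, Finset.mul_sum]
  refine Finset.sum_congr rfl fun i _ => ?_
  rw [bkK]
  ring

lemma bkF_iter (p : (ι → Fin L) × Fin L → K) (S : ℕ) (t0 : ℂ)
    (h : ∀ τ : ι → ℕ, ∑ i, τ i < S → bkF σ β lam p τ t0 = 0) (k : ℕ) :
    ∀ τ : ι → ℕ, ∑ i, τ i + k < S → iteratedDeriv k (bkF σ β lam p τ) t0 = 0 := by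
  induction k with
  | zero => intro τ hτ; simpa using h τ (by simpa using hτ)
  | succ k ih =>
    intro τ hτ
    rw [iteratedDeriv_succ', bkF_deriv]
    have hc : ∀ τ', ContDiff ℂ k (bkF σ β lam p τ') := fun τ' =>
      (bkF_diff σ β lam p τ').contDiff
    rw [iteratedDeriv_fun_sum (fun i _ => (contDiff_const.mul (hc _)).contDiffAt)]
    refine Finset.sum_eq_zero fun i _ => ?_
    rw [iteratedDeriv_const_mul_field, ih, mul_zero]
    simp only [Pi.add_apply, Finset.sum_add_distrib]
    rw [Finset.sum_pi_single']
    simp; omega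

/-- integrality -/
lemma bk_integral (D : ℕ) (hα : ∀ i, IsIntegral ℤ ((D : K) * α i)) (hα0 : IsIntegral ℤ ((D:K) * α0))
    (hβ : ∀ i, IsIntegral ℤ ((D : K) * β i)) (τ : ι → ℕ) (t : ℕ) (a : (ι → Fin L) × Fin L) :
    IsIntegral ℤ ((D : K) ^ (∑ i, τ i + ((Fintype.card ι + 1) * L) * t) * bkTerm α α0 β τ t a) := by
  have hD : ∀ n : ℕ, IsIntegral ℤ (n : K) := fun n => by
    have h := isIntegral_algebraMap (R := ℤ) (A := K) (x := (n : ℤ))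
    simpa using h
  have hpow : ∀ x : K, IsIntegral ℤ ((D:K) * x) → ∀ k : Fin L, IsIntegral ℤ ((D:K) ^ L * x ^ (k:ℕ)) := by
    intro x hx k
    have : (D:K) ^ L * x ^ (k:ℕ) = (D:K) ^ (L - k) * ((D:K) * x) ^ (k:ℕ) := by
      rw [mul_pow, ← mul_assoc, ← pow_add]
      congr 2; omega
    rw [this]
    exact ((hD D).pow _).mul (hx.pow _)
  have e : (D : K) ^ (∑ i, τ i + ((Fintype.card ι + 1) * L) * t) * bkTerm α α0 β τ t a
      = (∏ i, ((D:K) * bkC β a i) ^ τ i) *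
        ((∏ i, ((D:K) ^ L * α i ^ (a.1 i : ℕ))) * ((D:K) ^ L * α0 ^ (a.2:ℕ))) ^ t := by
    unfold bkTerm bkE
    rw [pow_add, pow_mul, ← Finset.prod_pow_eq_pow_sum]
    simp_rw [mul_pow, Finset.prod_mul_distrib, mul_pow]
    simp only [Finset.prod_const, Finset.card_univ]
    ring
  rw [e]
  refine IsIntegral.mul (IsIntegral.prod _ fun i _ => IsIntegral.pow ?_ _) (IsIntegral.pow
    (IsIntegral.mul (IsIntegral.prod _ fun i _ => hpow _ (hα i) _) (hpow _ hα0 _)) _)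
  unfold bkC
  have : (D:K) * (((a.1 i : ℕ) : K) + ((a.2 : ℕ) : K) * β i) =
    (D:K) * ((a.1 i : ℕ) : K) + ((a.2 : ℕ) : K) * ((D:K) * β i) := by ring
  rw [this]
  exact ((hD _).mul (hD _)).add ((hD _).mul (hβ i))

lemma bkC_bound (B : ℝ) (hβ : ∀ (φ : K →+* ℂ) i, 1 + ‖φ (β i)‖ ≤ B) (φ : K →+* ℂ)
    (a : (ι → Fin L) × Fin L) (i : ι) : ‖φ (bkC β a i)‖ ≤ L * B := by
  unfold bkC
  have h1 : ((a.1 i : ℕ) : ℝ) ≤ L := by exact_mod_cast (a.1 i).2.le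
  have h2 : ((a.2 : ℕ) : ℝ) ≤ L := by exact_mod_cast (a.2).2.le
  calc _ ≤ ‖φ (((a.1 i : ℕ) : K))‖ + ‖φ (((a.2 : ℕ) : K) * β i)‖ := by
        rw [map_add]; exact norm_add_le _ _
    _ = (a.1 i : ℕ) + (a.2 : ℕ) * ‖φ (β i)‖ := by simp
    _ ≤ L + L * ‖φ (β i)‖ := by gcongr
    _ = L * (1 + ‖φ (β i)‖) := by ring
    _ ≤ L * B := by gcongr; exact hβ φ i

lemma bkE_bound (B : ℝ) (hB : 1 ≤ B) (hα : ∀ (φ : K →+* ℂ) i, ‖φ (α i)‖ ≤ B)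
    (hα0 : ∀ (φ : K →+* ℂ), ‖φ α0‖ ≤ B) (φ : K →+* ℂ)
    (a : (ι → Fin L) × Fin L) : ‖φ (bkE α α0 a)‖ ≤ B ^ ((Fintype.card ι + 1) * L) := by
  unfold bkE
  have key : ∀ x : ℂ, ‖x‖ ≤ B → ∀ k : Fin L, ‖x ^ (k:ℕ)‖ ≤ B ^ L := by
    intro x hx k
    rw [norm_pow]
    calc _ ≤ B ^ (k:ℕ) := by gcongr
      _ ≤ B ^ L := pow_le_pow_right₀ hB k.2.le
  rw [map_mul, map_prod, norm_mul, norm_prod, add_mul, pow_add, one_mul]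
  gcongr
  · calc _ ≤ ∏ i : ι, B ^ L := by
          refine Finset.prod_le_prod (fun _ _ => norm_nonneg _) fun i _ => ?_
          rw [map_pow]; exact key _ (hα φ i) _
      _ = _ := by rw [Finset.prod_const, Finset.card_univ, ← pow_mul, mul_comm]
  · rw [map_pow]; exact key _ (hα0 φ) _

lemma bkTerm_bound (B : ℝ) (hB : 1 ≤ B) (hα : ∀ (φ : K →+* ℂ) i, ‖φ (α i)‖ ≤ B)
    (hα0 : ∀ (φ : K →+* ℂ), ‖φ α0‖ ≤ B) (hβ : ∀ (φ : K →+* ℂ) i, 1 + ‖φ (β i)‖ ≤ B)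
    (φ : K →+* ℂ) (τ : ι → ℕ) (t : ℕ)
    (a : (ι → Fin L) × Fin L) : ‖φ (bkTerm α α0 β τ t a)‖ ≤
      (L * B) ^ (∑ i, τ i) * B ^ ((Fintype.card ι + 1) * L * t) := by
  unfold bkTerm
  rw [map_mul, map_prod, map_pow, norm_mul, norm_prod, norm_pow, ← Finset.prod_pow_eq_pow_sum,
    pow_mul B]
  gcongr with i
  · rw [map_pow, norm_pow]
    gcongr
    exact bkC_bound β B hβ φ a i
  · exact bkE_bound α α0 B hB hα hα0 φ a

lemma bkF_bound (B : ℝ) (hβ : ∀ (φ : K →+* ℂ) i, 1 + ‖φ (β i)‖ ≤ B)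
    (P : ℝ) (p : (ι → Fin L) × Fin L → K) (hP : ∀ (φ : K →+* ℂ) a, ‖φ (p a)‖ ≤ P)
    (τ : ι → ℕ) (z : ℂ) : ‖bkF σ β lam p τ z‖ ≤
      L ^ (Fintype.card ι + 1) * P * (L * B) ^ (∑ i, τ i) *
        Real.exp (L * (B * ∑ i, ‖lam i‖) * ‖z‖) := by
  unfold bkF
  calc _ ≤ ∑ a : (ι → Fin L) × Fin L, P * (L * B) ^ (∑ i, τ i) *
        Real.exp (L * (B * ∑ i, ‖lam i‖) * ‖z‖) := by
        refine norm_sum_le_of_le _ fun a _ => ?_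
        have hPn : 0 ≤ P := (norm_nonneg _).trans (hP σ a)
        rw [norm_mul, norm_mul, norm_prod, ← Finset.prod_pow_eq_pow_sum, Complex.norm_exp]
        gcongr with i
        · exact mul_nonneg hPn <| Finset.prod_nonneg fun i _ => pow_nonneg
            ((norm_nonneg _).trans (bkC_bound β B hβ σ a i)) _
        · exact hP σ a
        · rw [norm_pow]
          gcongr
          exact bkC_bound β B hβ σ a i
        · refine (Complex.re_le_norm _).trans ?_
          rw [norm_mul]
          gcongr
          unfold bkK
          rw [← mul_assoc, Finset.mul_sum]
          refine norm_sum_le_of_le _ fun i _ => ?_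
          rw [norm_mul]
          gcongr
          exact bkC_bound β B hβ σ a i
    _ = _ := by
      rw [Finset.sum_const, Finset.card_univ]
      simp [pow_succ]
      ring

end defs


set_option linter.unusedSectionVars false
section defs
variable {K : Type} [Field K] [NumberField K] {ι : Type} [Fintype ι] [DecidableEq ι]
variable (σ : K →+* ℂ) (α : ι → K) (α0 : K) (β : ι → K) (lam : ι → ℂ) {L : ℕ}

lemma bk_final (hα : ∀ i, Complex.exp (lam i) = σ (α i))
    (hα0 : Complex.exp (∑ i, σ (β i) * lam i) = σ α0)
    (hind : ∀ (v : ι → ℤ) (w : ℤ), ∑ i, (v i : ℂ) * lam i + w * ∑ i, σ (β i) * lam i = 0 →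
      v = 0 ∧ w = 0)
    (p : (ι → Fin L) × Fin L → K)
    (H : ∀ τ : ι → ℕ, ∑ i, τ i < L → ∀ t < L ^ (Fintype.card ι + 1), bkPhi α α0 β p τ t = 0) :
    p = 0 := by
  classical
  have hpair : ∀ a b : (ι → Fin L) × Fin L, a ≠ b → bkE α α0 a = bkE α α0 b →
      ∃ k : ℤ, k ≠ 0 ∧ bkK σ β lam a - bkK σ β lam b = k * (2 * Real.pi * Complex.I) := by
    intro a b hab he
    have h1 : Complex.exp (bkK σ β lam a) = Complex.exp (bkK σ β lam b) := by
      rw [bk_exp σ α α0 β lam hα hα0, bk_exp σ α α0 β lam hα hα0, he]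
    obtain ⟨k, hk⟩ := Complex.exp_eq_exp_iff_exists_int.mp h1
    refine ⟨k, ?_, by rw [hk]; ring⟩
    rintro rfl
    apply hab
    have h2 := hind (fun i => (a.1 i : ℤ) - (b.1 i : ℤ)) ((a.2 : ℤ) - (b.2 : ℤ)) (by
      have h3 : bkK σ β lam a - bkK σ β lam b = 0 := by rw [hk]; simp
      rw [bkK_eq, bkK_eq] at h3
      rw [← h3]
      push_cast
      simp only [sub_mul, Finset.sum_sub_distrib]
      ring)
    have h4 : ∀ i, (a.1 i : ℤ) - (b.1 i : ℤ) = 0 := fun i => congrFun h2.1 i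
    ext i
    · have := h4 i; omega
    · have := h2.2; omega
  have hpair2 : ∀ a b c d : (ι → Fin L) × Fin L, ∀ k l : ℤ,
      bkK σ β lam a - bkK σ β lam b = k * (2 * Real.pi * Complex.I) →
      bkK σ β lam c - bkK σ β lam d = l * (2 * Real.pi * Complex.I) →
      (∀ i, l * ((a.1 i : ℤ) - (b.1 i : ℤ)) = k * ((c.1 i : ℤ) - (d.1 i : ℤ))) ∧
      l * ((a.2 : ℤ) - (b.2 : ℤ)) = k * ((c.2 : ℤ) - (d.2 : ℤ)) := by
    intro a b c d k l h1 h2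
    have h3 := hind (fun i => l * ((a.1 i : ℤ) - (b.1 i : ℤ)) - k * ((c.1 i : ℤ) - (d.1 i : ℤ)))
      (l * ((a.2 : ℤ) - (b.2 : ℤ)) - k * ((c.2 : ℤ) - (d.2 : ℤ))) (by
      have h4 : (l:ℂ) * (bkK σ β lam a - bkK σ β lam b) - k * (bkK σ β lam c - bkK σ β lam d) = 0 := by
        rw [h1, h2]; ring
      simp only [bkK_eq] at h4
      rw [← h4]
      push_cast
      simp only [sub_mul, Finset.sum_sub_distrib, mul_sub, mul_assoc, ← Finset.mul_sum]
      ring)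
    exact ⟨fun i => sub_eq_zero.mp (congrFun h3.1 i), sub_eq_zero.mp h3.2⟩
  funext a0
  have hcard : Fintype.card ((ι → Fin L) × Fin L) ≤ L ^ (Fintype.card ι + 1) := by
    simp [pow_succ]
  have hL0 : 0 < L := a0.2.pos
  by_cases hcl : ∃ a1, a1 ≠ a0 ∧ bkE α α0 a1 = bkE α α0 a0
  · obtain ⟨a1, ha1, he1⟩ := hcl
    obtain ⟨k1, hk1, hk1'⟩ := hpair a1 a0 ha1 he1
    have hi : ∃ i, bkC β a1 i ≠ bkC β a0 i := by
      by_contra! hcon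
      have : bkK σ β lam a1 - bkK σ β lam a0 = 0 := by
        unfold bkK; simp [hcon]
      rw [this] at hk1'
      have := (mul_eq_zero.mp hk1'.symm).resolve_right Complex.two_pi_I_ne_zero
      exact hk1 (by exact_mod_cast this)
    obtain ⟨i, hi⟩ := hi
    have hg : ∃ g : (ι → Fin L) × Fin L → Fin L, ∀ a b, a ≠ b →
        bkE α α0 a = bkE α α0 b → g a ≠ g b := by
      by_cases hw : a1.2 = a0.2
      · have : ∃ j, a1.1 j ≠ a0.1 j := by
          by_contra! hcon
          exact ha1 (Prod.ext (funext hcon) hw)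
        obtain ⟨j, hj⟩ := this
        refine ⟨fun a => a.1 j, fun a b hab he hg => ?_⟩
        obtain ⟨k, hk, hk'⟩ := hpair a b hab he
        have h1 := (hpair2 a b a1 a0 k k1 hk' hk1').1 j
        simp only at hg
        rw [hg, sub_self, mul_zero] at h1
        have := (mul_eq_zero.mp h1.symm).resolve_left hk
        apply hj; ext; omega
      · refine ⟨fun a => a.2, fun a b hab he hg => ?_⟩
        obtain ⟨k, hk, hk'⟩ := hpair a b hab he
        have h1 := (hpair2 a b a1 a0 k k1 hk' hk1').2
        simp only at hg
        rw [hg, sub_self, mul_zero] at h1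
        have := (mul_eq_zero.mp h1.symm).resolve_left hk
        apply hw; ext; omega
    obtain ⟨g, hg⟩ := hg
    refine bk_sep p (fun a => bkC β a i) (fun a => bkE α α0 a) a0 L _ hcard ?_ ?_ ?_
    · have : (univ.filter (fun a => a ≠ a0 ∧ bkE α α0 a = bkE α α0 a0)).card ≤
          ((univ : Finset (Fin L)).erase (g a0)).card := by
        refine Finset.card_le_card_of_injOn g ?_ ?_
        · intro a ha
          simp at ha
          simp [hg a a0 ha.1 ha.2]
        · intro a ha b hb hab
          simp at ha hb
          by_contra hne
          exact hg a b hne (ha.2.trans hb.2.symm) hab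
      refine lt_of_le_of_lt this ?_
      rw [Finset.card_erase_of_mem (Finset.mem_univ _), Finset.card_univ, Fintype.card_fin]
      omega
    · intro a ha he hc
      obtain ⟨k, hk, hk'⟩ := hpair a a0 ha he
      obtain ⟨h1, h2⟩ := hpair2 a a0 a1 a0 k k1 hk' hk1'
      have h1' : (k1:K) * (((a.1 i : ℕ) : K) - ((a0.1 i : ℕ) : K)) =
        k * (((a1.1 i : ℕ) : K) - ((a0.1 i : ℕ) : K)) := by exact_mod_cast congrArg (Int.cast : ℤ → K) (h1 i)
      have h2' : (k1:K) * (((a.2 : ℕ) : K) - ((a0.2 : ℕ) : K)) =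
        k * (((a1.2 : ℕ) : K) - ((a0.2 : ℕ) : K)) := by exact_mod_cast congrArg (Int.cast : ℤ → K) h2
      have h3 : (k:K) * (bkC β a1 i - bkC β a0 i) = k1 * (bkC β a i - bkC β a0 i) := by
        unfold bkC
        linear_combination (-1 : K) * h1' - β i * h2'
      rw [hc, sub_self, mul_zero] at h3
      rcases mul_eq_zero.mp h3 with h | h
      · exact hk (by exact_mod_cast h)
      · exact hi (sub_eq_zero.mp h)
    · intro j hj l hl
      have := H (Pi.single i j) (by simpa using hj) l hl
      rw [← this]
      unfold bkPhi bkTerm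
      refine Finset.sum_congr rfl fun a _ => ?_
      congr 2
      rw [Finset.prod_eq_single i]
      · simp
      · intro b _ hb; simp [Pi.single_eq_of_ne hb]
      · simp
  · push Not at hcl
    refine bk_sep p (fun a => 1) (fun a => bkE α α0 a) a0 L _ hcard ?_ ?_ ?_
    · rw [Finset.filter_false_of_mem]
      · simpa using hL0
      · intro a _ h; exact hcl a h.1 h.2
    · intro a ha he; exact absurd he (hcl a ha)
    · intro j hj l hl
      have := H 0 (by simpa using hL0) l hl
      rw [← this]
      unfold bkPhi bkTerm
      refine Finset.sum_congr rfl fun a _ => ?_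
      simp
end defs


lemma bk_num (n J d : ℕ) (D B c Λ : ℝ) (hD : 1 ≤ D) (hB : 1 ≤ B) (hc : 1 ≤ c) (hΛ : 0 ≤ Λ) :
    ∃ X : ℕ, 0 < X ∧ 2 * (J + 1) ^ n ≤ X ∧ ∀ j : ℕ, ∀ W L T : ℕ, W = X ^ (4 * n + 4) →
      L = X ^ (4 * n + 2) → T = (J + 1) * W → ∀ P : ℝ,
      P = c * (c * (L:ℝ) ^ (n + 1) * ((D * L * B) ^ (n * T) * (D * B) ^ ((n + 1) * L * X))) →
      ((L:ℝ) ^ (n + 1) * P * (D * L * B) ^ T * (D * B) ^ ((n + 1) * L * X ^ (j + 2)) *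
        Real.exp (L * Λ * (3 * (X:ℝ) ^ (j + 2)))) ^ d < 2 ^ (W * X ^ (j + 1)) := by
  set κ := Real.log (D * B) with hκ
  set γ := Real.log c with hγ
  have hDB : 1 ≤ D * B := one_le_mul_of_one_le_of_one_le hD hB
  have hκ0 : 0 ≤ κ := Real.log_nonneg hDB
  have hγ0 : 0 ≤ γ := Real.log_nonneg hc
  have eκ : D * B = Real.exp κ := (Real.exp_log (by linarith)).symm
  have eγ : c = Real.exp γ := (Real.exp_log (by linarith)).symm
  set C1 : ℝ := (n+1) * (4*n+2) + (2 * γ + (n+1) * (4*n+2) + n * (J+1) * (κ + (4*n+2)) + (n+1) * κ)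
    + (J+1) * (κ + (4*n+2)) + (n+1) * κ + 3 * Λ with hC1
  have hev : ∀ᶠ x : ℝ in atTop, d * C1 * (2 + Real.log x) < x * Real.log 2 := by
    have h1 : (fun x : ℝ => d * C1 * (2 + Real.log x)) =o[atTop] (fun x => x) := by
      refine Asymptotics.IsLittleO.const_mul_left ?_ _
      refine Asymptotics.IsLittleO.add ?_ Real.isLittleO_log_id_atTop
      exact Asymptotics.isLittleO_const_id_atTop _
    have hl2 : 0 < Real.log 2 / 2 := by have := Real.log_pos one_lt_two; linarith
    filter_upwards [h1.def hl2, eventually_gt_atTop 0] with x hx hx0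
    rw [Real.norm_eq_abs, Real.norm_eq_abs, abs_of_pos hx0] at hx
    have := le_abs_self (d * C1 * (2 + Real.log x))
    nlinarith
  have hev2 := tendsto_natCast_atTop_atTop.eventually hev
  obtain ⟨X, hX, hX2, hX1⟩ := (hev2.and ((eventually_ge_atTop (2 * (J + 1) ^ n)).and
    (eventually_ge_atTop 1))).exists
  refine ⟨X, hX1, hX2, ?_⟩
  intro j W L T hW hL hT P hP
  have hx1 : (1:ℝ) ≤ X := by exact_mod_cast hX1
  set x : ℝ := (X:ℝ) with hx
  set l := Real.log x with hl
  have hl0 : 0 ≤ l := Real.log_nonneg hx1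
  have ex : x = Real.exp l := (Real.exp_log (by linarith)).symm
  have hLr : (L:ℝ) = x ^ (4*n+2) := by rw [hL]; push_cast; rfl
  have eL : (L:ℝ) = Real.exp ((4*n+2) * l) := by
    rw [hLr]; conv_lhs => rw [ex]
    rw [← Real.exp_nat_mul]; push_cast; rfl
  have eDLB : D * L * B = Real.exp (κ + (4*n+2) * l) := by
    rw [Real.exp_add, ← eκ, ← eL]; ring
  have hE : (L:ℝ) ^ (n + 1) * P * (D * L * B) ^ T * (D * B) ^ ((n + 1) * L * X ^ (j + 2)) *
        Real.exp (L * Λ * (3 * (X:ℝ) ^ (j + 2))) = Real.exp (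
        (n+1) * ((4*n+2) * l) + (γ + (γ + (n+1) * ((4*n+2)*l) + (n * T * (κ + (4*n+2) * l)
          + ((n+1) * L * x) * κ)))
        + T * (κ + (4*n+2)*l) + ((n+1) * L * x ^ (j+2)) * κ + L * Λ * (3 * x ^ (j+2))) := by
    rw [hP, eDLB, eκ, eγ]
    simp only [Real.exp_add]
    have e1 : (L:ℝ) ^ (n+1) = Real.exp ((n+1) * ((4*n+2) * l)) := by
      rw [eL, ← Real.exp_nat_mul]; push_cast; rfl
    have e2 : ∀ (k : ℕ) (y : ℝ), Real.exp y ^ k = Real.exp (k * y) := fun k y =>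
      (Real.exp_nat_mul y k).symm
    rw [e1]
    simp only [mul_pow, e2, ← Real.exp_add]
    congr 1
    push_cast
    ring
  rw [hE, ← Real.exp_nat_mul]
  have h2 : (2:ℝ) ^ (W * X ^ (j + 1)) = Real.exp ((W * x ^ (j+1)) * Real.log 2) := by
    rw [← Real.exp_log (show (0:ℝ) < 2 by norm_num), ← Real.exp_nat_mul, Real.exp_log (by norm_num)]
    push_cast; rfl
  rw [h2]
  apply Real.exp_lt_exp.mpr
  have hWr : (W:ℝ) = x ^ (4*n+4) := by rw [hW]; push_cast; rfl
  have hW1 : (1:ℝ) ≤ W := by rw [hWr]; exact one_le_pow₀ hx1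
  have hxj : (1:ℝ) ≤ x ^ j := one_le_pow₀ hx1
  have hTr : (T:ℝ) = (J+1) * W := by rw [hT]; push_cast; rfl
  have hLX : (L:ℝ) * x ^ (j+2) = W * x ^ j := by rw [hLr, hWr]; ring
  have hLx : (L:ℝ) * x ≤ W := by
    rw [hLr, hWr, ← pow_succ]; exact pow_le_pow_right₀ hx1 (by omega)
  have hWx : (1:ℝ) ≤ W * x ^ j := one_le_mul_of_one_le_of_one_le hW1 hxj
  have hWxW : (W:ℝ) ≤ W * x ^ j := le_mul_of_one_le_right (by linarith) hxj
  set V := (W:ℝ) * x ^ j * (2 + l) with hV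
  have hV1 : (W:ℝ) * x ^ j ≤ V := le_mul_of_one_le_right (by linarith) (by linarith)
  have hVl : (W:ℝ) * x ^ j * l ≤ V := mul_le_mul_of_nonneg_left (by linarith) (by linarith)
  have b1 : l ≤ V := (le_mul_of_one_le_left hl0 hWx).trans hVl
  have b2 : 1 ≤ V := hWx.trans hV1
  have b3 : (W:ℝ) ≤ V := hWxW.trans hV1
  have b4 : (W:ℝ) * l ≤ V := (mul_le_mul_of_nonneg_right hWxW hl0).trans hVl
  have b5 : (L:ℝ) * x ≤ V := hLx.trans b3
  have key : (n+1) * ((4*n+2) * l) + (γ + (γ + (n+1) * ((4*n+2)*l) + (n * T * (κ + (4*n+2) * l)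
          + ((n+1) * L * x) * κ)))
        + T * (κ + (4*n+2)*l) + ((n+1) * L * x ^ (j+2)) * κ + L * Λ * (3 * x ^ (j+2)) ≤ C1 * V := by
    have e : (n+1) * ((4*n+2) * l) + (γ + (γ + (n+1) * ((4*n+2)*l) + (n * T * (κ + (4*n+2) * l)
          + ((n+1) * L * x) * κ)))
        + T * (κ + (4*n+2)*l) + ((n+1) * L * x ^ (j+2)) * κ + L * Λ * (3 * x ^ (j+2)) =
        (n+1) * (4*n+2) * l + (2 * γ * 1 + (n+1) * (4*n+2)*l + n * (J+1) * (κ * W + (4*n+2) * (W * l))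
          + (n+1) * κ * (L * x))
        + (J+1) * (κ * W + (4*n+2)*(W * l)) + (n+1) * κ * (W * x ^ j) + 3 * Λ * (W * x ^ j) := by
      rw [hTr, ← hLX]; ring
    have e' : C1 * V = (n+1) * (4*n+2) * V + (2 * γ * V + (n+1) * (4*n+2)*V + n * (J+1) * (κ * V + (4*n+2) * V)
          + (n+1) * κ * V)
        + (J+1) * (κ * V + (4*n+2)*V) + (n+1) * κ * V + 3 * Λ * V := by
      rw [hC1]; ring
    rw [e, e']
    gcongr
  have hX' : d * C1 * V < (W * x ^ (j+1)) * Real.log 2 := by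
    have : (0:ℝ) < W * x ^ j := by linarith
    have := mul_lt_mul_of_pos_left hX this
    calc d * C1 * V = W * x ^ j * (d * C1 * (2 + l)) := by rw [hV]; ring
      _ < _ := this
      _ = _ := by rw [pow_succ]; ring
  calc _ ≤ (d:ℝ) * (C1 * V) := by gcongr
    _ = d * C1 * V := by ring
    _ < _ := hX'


lemma bk_house_le {K : Type} [Field K] [NumberField K] (x : K) (Z : ℝ) 
    (h : ∀ φ : K →+* ℂ, ‖φ x‖ ≤ Z) : NumberField.house x ≤ Z := by
  rw [NumberField.house_eq_sup']
  have hb := Finset.sup'_le (s := Finset.univ) Finset.univ_nonempty (fun φ : K →+* ℂ => ‖φ x‖₊)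
    (a := ⟨Z, (norm_nonneg _).trans (h (Classical.arbitrary _))⟩) (fun φ _ => h φ)
  exact hb

lemma bk_step {K : Type} [Field K] [NumberField K] {ι : Type} [Fintype ι] [DecidableEq ι]
    (σ : K →+* ℂ) (α : ι → K) (α0 : K) (β : ι → K) (lam : ι → ℂ) {L : ℕ}
    (hα : ∀ i, Complex.exp (lam i) = σ (α i))
    (hα0 : Complex.exp (∑ i, σ (β i) * lam i) = σ α0)
    (D : ℕ) (hD : 1 ≤ D) (hDα : ∀ i, IsIntegral ℤ ((D : K) * α i)) (hDα0 : IsIntegral ℤ ((D:K) * α0))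
    (hDβ : ∀ i, IsIntegral ℤ ((D : K) * β i))
    (B : ℝ) (hB : 1 ≤ B) (hBα : ∀ (φ : K →+* ℂ) i, ‖φ (α i)‖ ≤ B)
    (hBα0 : ∀ (φ : K →+* ℂ), ‖φ α0‖ ≤ B) (hBβ : ∀ (φ : K →+* ℂ) i, 1 + ‖φ (β i)‖ ≤ B)
    (P : ℝ) (hP0 : 0 ≤ P) (p : (ι → Fin L) × Fin L → K) (hpi : ∀ a, IsIntegral ℤ (p a))
    (hP : ∀ (φ : K →+* ℂ) a, ‖φ (p a)‖ ≤ P) (hL : 1 ≤ L)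
    (S W T N N' : ℕ) (hT : S ≤ T) (hN' : 0 < N') (hNN : N ≤ N')
    (hnum : ((L:ℝ) ^ (Fintype.card ι + 1) * P * ((D:ℝ) * L * B) ^ T *
      ((D:ℝ) * B) ^ ((Fintype.card ι + 1) * L * N') *
        Real.exp (L * (B * ∑ i, ‖lam i‖) * (3 * (N':ℝ)))) ^ (Module.finrank ℚ K) < 2 ^ (W * N))
    (H : ∀ τ : ι → ℕ, ∑ i, τ i < S + W → ∀ t < N, bkPhi α α0 β p τ t = 0) :
    ∀ τ : ι → ℕ, ∑ i, τ i < S → ∀ t < N', bkPhi α α0 β p τ t = 0 := by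
  intro τ hτ t ht
  by_contra hne
  set n := Fintype.card ι with hn
  set Λ := B * ∑ i, ‖lam i‖ with hΛ
  have hΛ0 : 0 ≤ Λ := by positivity
  set Z := (L:ℝ) ^ (n + 1) * P * ((D:ℝ) * L * B) ^ T *
      ((D:ℝ) * B) ^ ((n + 1) * L * N') * Real.exp (L * Λ * (3 * (N':ℝ))) with hZ
  have hDr : (1:ℝ) ≤ D := by exact_mod_cast hD
  have hLr : (1:ℝ) ≤ L := by exact_mod_cast hL
  have hDB : 1 ≤ (D:ℝ) * B := one_le_mul_of_one_le_of_one_le hDr hB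
  have hDLB : 1 ≤ (D:ℝ) * L * B := 
    one_le_mul_of_one_le_of_one_le (one_le_mul_of_one_le_of_one_le hDr hLr) hB
  have hexp : 1 ≤ Real.exp (L * Λ * (3 * (N':ℝ))) := Real.one_le_exp (by positivity)
  have hτT : ∑ i, τ i ≤ T := by omega
  have htN : (n + 1) * L * t ≤ (n + 1) * L * N' := Nat.mul_le_mul_left _ ht.le
  set x : K := (D:K) ^ (∑ i, τ i + ((n + 1) * L) * t) * bkPhi α α0 β p τ t with hx
  have hx0 : x ≠ 0 := mul_ne_zero (pow_ne_zero _ (by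
    have : D ≠ 0 := by omega
    exact_mod_cast this)) hne
  have hxi : IsIntegral ℤ x := by
    rw [hx, bkPhi, Finset.mul_sum]
    refine IsIntegral.sum _ fun a _ => ?_
    rw [mul_left_comm]
    exact (hpi a).mul (bk_integral α α0 β D hDα hDα0 hDβ τ t a)
  have hcard : Fintype.card ((ι → Fin L) × Fin L) = L ^ (n+1) := by
    simp [pow_succ, hn]
  have hnormD : ∀ (φ : K →+* ℂ) (m : ℕ), ‖φ ((D:K) ^ m)‖ = (D:ℝ) ^ m := by
    intro φ m; simp
  have hphi : ∀ φ : K →+* ℂ, ‖φ x‖ ≤ Z := by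
    intro φ
    rw [hx, map_mul, norm_mul, hnormD, bkPhi, map_sum]
    calc _ ≤ (D:ℝ) ^ (∑ i, τ i + ((n + 1) * L) * t) * ∑ a : (ι → Fin L) × Fin L,
          P * ((L * B) ^ (∑ i, τ i) * B ^ ((n + 1) * L * t)) := by
          gcongr
          refine (norm_sum_le _ _).trans (Finset.sum_le_sum fun a _ => ?_)
          rw [map_mul, norm_mul]
          gcongr
          · exact hP φ a
          · exact bkTerm_bound α α0 β B hB hBα hBα0 hBβ φ τ t a
      _ = (L:ℝ) ^ (n + 1) * P * ((D:ℝ) * L * B) ^ (∑ i, τ i) * ((D:ℝ) * B) ^ ((n + 1) * L * t) * 1 := by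
          rw [Finset.sum_const, Finset.card_univ, hcard, nsmul_eq_mul]
          push_cast
          simp only [mul_pow, pow_add]; ring
      _ ≤ Z := by
          rw [hZ]
          gcongr
  have hZ0 : 0 ≤ Z := (norm_nonneg _).trans (hphi σ)
  have hliou := bk_liouville σ x hxi hx0 Z (bk_house_le x Z hphi)
  have hsch := bk_schwarz (bkF σ β lam p τ) (bkF_diff σ β lam p τ) W N N' hN' hNN
    (fun k hk i hi => bkF_iter σ β lam p (S + W) k (fun τ' hτ' => by
      rw [bkF_nat σ α α0 β lam hα hα0, H τ' hτ' k hk, map_zero]) i τ (by omega))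
    ((L:ℝ) ^ (n + 1) * P * (L * B) ^ (∑ i, τ i) * Real.exp (L * Λ * (3 * N'))) (fun z hz => by
      refine (bkF_bound σ β lam B hBβ P p hP τ z).trans ?_
      gcongr) t ht
  rw [bkF_nat σ α α0 β lam hα hα0] at hsch
  have h3 : ‖σ x‖ * 2 ^ (W * N) ≤ Z := by
    rw [hx, map_mul, norm_mul, hnormD, mul_assoc]
    refine (mul_le_mul_of_nonneg_left hsch (by positivity)).trans ?_
    calc _
      _ = (L:ℝ) ^ (n + 1) * P * ((D:ℝ) * L * B) ^ (∑ i, τ i) * (D:ℝ) ^ ((n + 1) * L * t) *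
          Real.exp (L * Λ * (3 * N')) := by
          simp only [mul_pow, pow_add]; ring
      _ ≤ Z := by
          rw [hZ]
          gcongr ?_ * ?_ * ?_
          · gcongr
          · refine le_trans (pow_le_pow_left₀ (by positivity) (le_mul_of_one_le_right (by positivity) hB) _) ?_
            gcongr
  have hd : 0 < Module.finrank ℚ K := Module.finrank_pos
  have : (2:ℝ) ^ (W * N) ≤ Z ^ (Module.finrank ℚ K) := by
    calc (2:ℝ) ^ (W*N) ≤ (‖σ x‖ * Z ^ (Module.finrank ℚ K - 1)) * 2 ^ (W*N) := 
          le_mul_of_one_le_left (by positivity) hliou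
      _ = (‖σ x‖ * 2 ^ (W*N)) * Z ^ (Module.finrank ℚ K - 1) := by ring
      _ ≤ Z * Z ^ (Module.finrank ℚ K - 1) := by gcongr
      _ = Z ^ (Module.finrank ℚ K) := by rw [← pow_succ']; congr 1; omega
  linarith

theorem bk_core {K : Type} [Field K] [NumberField K] {ι : Type} [Fintype ι] [DecidableEq ι]
    (σ : K →+* ℂ) (α : ι → K) (α0 : K) (β : ι → K) (lam : ι → ℂ)
    (hα : ∀ i, Complex.exp (lam i) = σ (α i))
    (hα0 : Complex.exp (∑ i, σ (β i) * lam i) = σ α0)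
    (hind : ∀ (v : ι → ℤ) (w : ℤ), ∑ i, (v i : ℂ) * lam i + w * ∑ i, σ (β i) * lam i = 0 →
      v = 0 ∧ w = 0) : False := by
  classical
  obtain ⟨D, hD, hDα, hDα0, hDβ⟩ : ∃ D : ℕ, 1 ≤ D ∧ (∀ i, IsIntegral ℤ ((D : K) * α i)) ∧
      IsIntegral ℤ ((D:K) * α0) ∧ (∀ i, IsIntegral ℤ ((D : K) * β i)) := by
    obtain ⟨y, hy, h⟩ := exists_integral_multiples ℤ ℚ
      (insert α0 (univ.image α ∪ univ.image β) : Finset K)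
    have h' : ∀ x ∈ (insert α0 (univ.image α ∪ univ.image β) : Finset K),
        IsIntegral ℤ ((y.natAbs : K) * x) := by
      intro x hx
      have h1 := h x hx
      rw [zsmul_eq_mul] at h1
      rcases Int.natAbs_eq y with h2 | h2
      · rw [h2] at h1; simpa using h1
      · rw [h2] at h1; simpa using h1.neg
    exact ⟨y.natAbs, Nat.one_le_iff_ne_zero.mpr (by simpa using hy), fun i => h' _ (by simp),
      h' _ (by simp), fun i => h' _ (by simp)⟩
  obtain ⟨B, hB, hBα, hBα0, hBβ⟩ : ∃ B : ℝ, 1 ≤ B ∧ (∀ (φ : K →+* ℂ) i, ‖φ (α i)‖ ≤ B) ∧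
      (∀ (φ : K →+* ℂ), ‖φ α0‖ ≤ B) ∧ (∀ (φ : K →+* ℂ) i, 1 + ‖φ (β i)‖ ≤ B) := by
    refine ⟨1 + ∑ i, NumberField.house (α i) + NumberField.house α0 + ∑ i, NumberField.house (β i), ?_⟩
    have h0 : ∀ x : K, 0 ≤ NumberField.house x := fun x => NumberField.house_nonneg x
    have h1 : 0 ≤ ∑ i, NumberField.house (α i) := Finset.sum_nonneg fun i _ => h0 _
    have h2 : 0 ≤ ∑ i, NumberField.house (β i) := Finset.sum_nonneg fun i _ => h0 _
    have h3 := h0 α0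
    refine ⟨by linarith, fun φ i => ?_, fun φ => ?_, fun φ i => ?_⟩
    · have := NumberField.norm_embedding_le_house (α i) φ
      have h4 := Finset.single_le_sum (f := fun i => NumberField.house (α i)) (fun i _ => h0 _) (mem_univ i)
      linarith
    · have := NumberField.norm_embedding_le_house α0 φ
      linarith
    · have := NumberField.norm_embedding_le_house (β i) φ
      have h4 := Finset.single_le_sum (f := fun i => NumberField.house (β i)) (fun i _ => h0 _) (mem_univ i)
      linarith
  obtain ⟨c, hc, hsiegel⟩ := bk_siegel K
  set n := Fintype.card ι with hn
  set J := 4 * (n+1)^2 with hJ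
  set Λ := B * ∑ i, ‖lam i‖ with hΛ
  have hDr : (1:ℝ) ≤ D := by exact_mod_cast hD
  obtain ⟨X, hX, hX2, hnum⟩ := bk_num n J (Module.finrank ℚ K) D B c Λ hDr hB hc (by positivity)
  set W := X ^ (4*n+4) with hW
  set L := X ^ (4*n+2) with hL
  set T := (J+1) * W with hT
  have hL1 : 1 ≤ L := Nat.one_le_pow _ _ hX
  have hW1 : 1 ≤ W := Nat.one_le_pow _ _ hX
  have hT1 : 1 ≤ T := Nat.mul_pos (by omega) hW1
  set A : ℝ := ((D:ℝ) * L * B) ^ (n * T) * (D * B) ^ ((n + 1) * L * X) with hA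
  set P : ℝ := c * (c * (L:ℝ) ^ (n + 1) * A) with hP
  have hLr : (1:ℝ) ≤ L := by exact_mod_cast hL1
  have hDB : 1 ≤ (D:ℝ) * B := one_le_mul_of_one_le_of_one_le hDr hB
  have hDLB : 1 ≤ (D:ℝ) * L * B := 
    one_le_mul_of_one_le_of_one_le (one_le_mul_of_one_le_of_one_le hDr hLr) hB
  have hA1 : 1 ≤ A := one_le_mul_of_one_le_of_one_le (one_le_pow₀ hDLB) (one_le_pow₀ hDB)
  have hnormD : ∀ (φ : K →+* ℂ) (m : ℕ), ‖φ ((D:K) ^ m)‖ = (D:ℝ) ^ m := by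
    intro φ m; simp
  have hcard : Fintype.card ((ι → Fin L) × Fin L) = L ^ (n+1) := by
    simp [pow_succ, hn]
  -- the linear system
  let M : Matrix ((ι → Fin T) × Fin X) ((ι → Fin L) × Fin L) (NumberField.RingOfIntegers K) :=
    fun k a => ⟨(D : K) ^ (∑ i, (k.1 i : ℕ) + ((n + 1) * L) * (k.2 : ℕ)) *
      bkTerm α α0 β (fun i => (k.1 i : ℕ)) (k.2 : ℕ) a,
      bk_integral α α0 β D hDα hDα0 hDβ _ _ a⟩
  have hMv : ∀ k a, algebraMap (NumberField.RingOfIntegers K) K (M k a) = 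
      (D : K) ^ (∑ i, (k.1 i : ℕ) + ((n + 1) * L) * (k.2 : ℕ)) *
      bkTerm α α0 β (fun i => (k.1 i : ℕ)) (k.2 : ℕ) a := fun k a => rfl
  have hM0 : M ≠ 0 := by
    intro h
    have := congrFun (congrFun h (fun _ => ⟨0, hT1⟩, ⟨0, hX⟩)) (fun _ => ⟨0, hL1⟩, ⟨0, hL1⟩)
    have h2 := congrArg (algebraMap (NumberField.RingOfIntegers K) K) this
    rw [hMv] at h2
    simp [bkTerm] at h2
  have hMh : ∀ k a, NumberField.house (algebraMap (NumberField.RingOfIntegers K) K (M k a)) ≤ A := by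
    intro k a
    refine bk_house_le _ _ fun φ => ?_
    rw [hMv, map_mul, norm_mul, hnormD]
    have hk1 : ∑ i, (k.1 i : ℕ) ≤ n * T := by
      calc ∑ i, (k.1 i : ℕ) ≤ ∑ i : ι, T := Finset.sum_le_sum fun i _ => (k.1 i).2.le
        _ = n * T := by simp [hn]
    have hk2 : (n+1) * L * (k.2 : ℕ) ≤ (n+1) * L * X := Nat.mul_le_mul_left _ k.2.2.le
    calc _ ≤ (D:ℝ) ^ (∑ i, (k.1 i : ℕ) + ((n + 1) * L) * (k.2 : ℕ)) *
          ((L * B) ^ (∑ i, (k.1 i : ℕ)) * B ^ ((n + 1) * L * (k.2:ℕ))) := by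
            gcongr
            exact bkTerm_bound α α0 β B hB hBα hBα0 hBβ φ _ _ a
      _ = ((D:ℝ) * L * B) ^ (∑ i, (k.1 i : ℕ)) * (D * B) ^ ((n + 1) * L * (k.2:ℕ)) := by
          simp only [mul_pow, pow_add]; ring
      _ ≤ A := by
          rw [hA]; gcongr
  have hcard1 : Fintype.card ((ι → Fin T) × Fin X) = T ^ n * X := by
    simp [hn]
  have hle : 2 * Fintype.card ((ι → Fin T) × Fin X) ≤ Fintype.card ((ι → Fin L) × Fin L) := by
    rw [hcard, hcard1, hT, hW, hL, mul_pow]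
    calc 2 * ((J+1)^n * (X ^ (4*n+4))^n * X) = (2 * (J+1)^n) * (X ^ (4*n+4))^n * X := by ring
      _ ≤ X * (X ^ (4*n+4))^n * X := by gcongr
      _ = X ^ ((4*n+4)*n + 2) := by rw [← pow_mul]; ring
      _ ≤ X ^ ((4*n+2)*(n+1)) := by
          apply Nat.pow_le_pow_right hX
          nlinarith
      _ = _ := by rw [pow_mul]
  obtain ⟨ξ, hξ0, hξ, hξh⟩ := hsiegel _ _ M hM0 (by
    rw [hcard1]; exact Nat.mul_pos (Nat.pow_pos hT1) hX) hle A hA1 hMh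
  set p : (ι → Fin L) × Fin L → K := fun a => (ξ a : K) with hp
  have hpi : ∀ a, IsIntegral ℤ (p a) := fun a => NumberField.RingOfIntegers.isIntegral_coe _
  have hpP : ∀ (φ : K →+* ℂ) a, ‖φ (p a)‖ ≤ P := by
    intro φ a
    refine (NumberField.norm_embedding_le_house _ _).trans ((hξh a).trans ?_)
    rw [hP, hcard]; push_cast; exact le_refl _
  have hP0 : 0 ≤ P := by positivity
  have hbase : ∀ τ : ι → ℕ, ∑ i, τ i < T → ∀ t < X, bkPhi α α0 β p τ t = 0 := by
    intro τ hτ t ht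
    have hτi : ∀ i, τ i < T := fun i => 
      lt_of_le_of_lt (Finset.single_le_sum (f := τ) (fun _ _ => Nat.zero_le _) (mem_univ i)) hτ
    have h1 := congrFun hξ (fun i => ⟨τ i, hτi i⟩, ⟨t, ht⟩)
    have h2 := congrArg (algebraMap (NumberField.RingOfIntegers K) K) h1
    simp only [Matrix.mulVec, dotProduct, map_sum, map_mul, hMv, Pi.zero_apply, map_zero] at h2
    have hDne : (D:K) ≠ 0 := by
      have : D ≠ 0 := by omega
      exact_mod_cast this
    simp only [mul_assoc, ← Finset.mul_sum] at h2
    have h3 := (mul_eq_zero.mp h2).resolve_left (pow_ne_zero _ hDne)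
    rw [bkPhi, ← h3]
    exact Finset.sum_congr rfl fun a _ => mul_comm _ _
  have hind2 : ∀ j ≤ J, ∀ τ : ι → ℕ, ∑ i, τ i < (J + 1 - j) * W → ∀ t < X ^ (j+1),
      bkPhi α α0 β p τ t = 0 := by
    intro j
    induction j with
    | zero => intro _ τ h t ht; exact hbase τ (by simpa using h) t (by simpa using ht)
    | succ j ih =>
      intro hj
      have hS : (J + 1 - j) * W = (J + 1 - (j+1)) * W + W := by
        have : J + 1 - j = (J + 1 - (j+1)) + 1 := by omega
        rw [this, add_mul, one_mul]
      refine bk_step σ α α0 β lam hα hα0 D hD hDα hDα0 hDβ B hB hBα hBα0 hBβ P hP0 p hpi hpP hL1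
        ((J + 1 - (j+1)) * W) W T (X^(j+1)) (X^(j+1+1)) ?_ (Nat.pow_pos hX)
        (Nat.pow_le_pow_right hX (by omega)) ?_ ?_
      · rw [hT]; exact Nat.mul_le_mul_right _ (by omega)
      · have := hnum j W L T rfl rfl rfl P rfl
        push_cast
        exact this
      · rw [← hS]; exact ih (by omega)
  have hfin := bk_final σ α α0 β lam hα hα0 hind p (fun τ hτ t ht => hind2 J le_rfl τ (by
      have : L ≤ W := Nat.pow_le_pow_right hX (by omega)
      have h1 : J + 1 - J = 1 := by omega
      rw [h1, one_mul]; omega) t (lt_of_lt_of_le ht (by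
        rw [hL, ← pow_mul]
        apply Nat.pow_le_pow_right hX
        rw [hJ]; nlinarith)))
  apply hξ0
  ext a
  have := congrFun hfin a
  simpa [hp] using this


lemma bk_indep {K : Type} [Field K] [NumberField K] {κ : Type} [Fintype κ] (σ : K →+* ℂ)
    (α γ : κ → K) (lam : κ → ℂ) (hα : ∀ i, Complex.exp (lam i) = σ (α i))
    (hli : LinearIndependent ℚ lam) (h : ∑ i, σ (γ i) * lam i = 0) : γ = 0 := by
  classical
  by_contra hne
  obtain ⟨j0, hj0⟩ := Function.ne_iff.mp hne
  simp only [Pi.zero_apply] at hj0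
  have hs : ∀ g : κ → ℂ, ∑ j, g j = ∑ j : {j // j ≠ j0}, g j + g j0 := by
    intro g
    rw [← Finset.sum_erase_add _ _ (mem_univ j0)]
    congr 1
    exact Finset.sum_subtype _ (by simp) g
  have hσ : σ (γ j0) ≠ 0 := by simpa using hj0
  have hmu : ∑ j : {j // j ≠ j0}, σ (-γ j / γ j0) * lam j = lam j0 := by
    rw [hs] at h
    have h1 : ∑ j : {j // j ≠ j0}, σ (-γ j / γ j0) * lam j =
        -(∑ j : {j // j ≠ j0}, σ (γ j) * lam j) / σ (γ j0) := by
      rw [neg_div, Finset.sum_div, ← Finset.sum_neg_distrib]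
      refine Finset.sum_congr rfl fun j _ => ?_
      rw [map_div₀, map_neg]; ring
    rw [h1, div_eq_iff hσ]
    linear_combination -h
  refine bk_core (ι := {j // j ≠ j0}) σ (fun j => α j) (α j0) (fun j => -γ j / γ j0) 
    (fun j => lam j) (fun j => hα j) (by rw [hmu]; exact hα j0) ?_
  intro v w hvw
  rw [hmu] at hvw
  have := Fintype.linearIndependent_iff.mp hli
    (fun j => if hj : j = j0 then (w:ℚ) else ((v ⟨j, hj⟩ : ℤ) : ℚ)) (by
      rw [hs, ← hvw]
      simp only [dite_true, Rat.smul_def]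
      push_cast
      congr 1
      refine Finset.sum_congr rfl fun j _ => ?_
      simp [j.2])
  constructor
  · ext j
    have h1 := this j
    simpa [j.2] using h1
  · simpa using this j0

theorem bk_conj {K : Type} [Field K] [NumberField K] {ι : Type} [Fintype ι] (σ σ' : K →+* ℂ)
    (α β : ι → K) (lam : ι → ℂ) (hα : ∀ i, Complex.exp (lam i) = σ (α i))
    (h : ∑ i, σ (β i) * lam i = 0) : ∑ i, σ' (β i) * lam i = 0 := by
  classical
  obtain ⟨κ, a, hinj, hspan, hli⟩ := exists_linearIndependent' ℚ lam
  haveI : Finite κ := Finite.of_injective a hinj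
  haveI := Fintype.ofFinite κ
  have hr : ∀ i, ∃ r : κ → ℚ, ∑ j, r j • (lam ∘ a) j = lam i := by
    intro i
    rw [← Submodule.mem_span_range_iff_exists_fun, hspan]
    exact Submodule.subset_span ⟨i, rfl⟩
  choose r hr using hr
  have key : ∀ φ : K →+* ℂ, ∑ i, φ (β i) * lam i = ∑ j, φ (∑ i, β i * (r i j : K)) * (lam ∘ a) j := by
    intro φ
    have : ∀ i, φ (β i) * lam i = ∑ j, φ (β i) * ((r i j : ℂ) * (lam ∘ a) j) := by
      intro i
      rw [← Finset.mul_sum]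
      congr 1
      rw [← hr i]
      simp [Rat.smul_def]
    simp_rw [this]
    rw [Finset.sum_comm]
    refine Finset.sum_congr rfl fun j _ => ?_
    rw [map_sum, Finset.sum_mul]
    refine Finset.sum_congr rfl fun i _ => ?_
    rw [map_mul, map_ratCast]; ring
  rw [key] at h ⊢
  have := bk_indep σ (fun j => α (a j)) _ (lam ∘ a) (fun j => hα (a j)) hli h
  have h2 : ∀ j, ∑ i, β i * (r i j : K) = 0 := fun j => congrFun this j
  simp [h2]


/-- Fourier coefficient with respect to an additive character. -/
noncomputable def eHat {q : ℕ} [NeZero q] {K : Type} [Field K] (ψ : AddChar (ZMod q) K)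
    (F : ZMod q → K) (a : ZMod q) : K := ∑ b, F b * ψ (-(a * b))

lemma e_inv {q : ℕ} [NeZero q] (ψ : AddChar (ZMod q) ℂ) (hψ : ψ.IsPrimitive) (F : ZMod q → ℂ)
    (n : ZMod q) : ∑ a, eHat ψ F a * ψ (a * n) = q * F n := by
  unfold eHat
  simp_rw [Finset.sum_mul]
  rw [Finset.sum_comm]
  have : ∀ b, ∑ a, F b * ψ (-(a * b)) * ψ (a * n) = F b * ((if n - b = 0 then Fintype.card (ZMod q) else 0 : ℕ) : ℂ) := by
    intro b
    rw [← AddChar.sum_mulShift (n - b) hψ, Finset.mul_sum]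
    refine Finset.sum_congr rfl fun a _ => ?_
    rw [mul_assoc, ← AddChar.map_add_eq_mul]
    congr 2; ring
  simp_rw [this, sub_eq_zero]
  rw [Finset.sum_eq_single n]
  · simp [ZMod.card, mul_comm]
  · intro b _ hb; simp [hb.symm]
  · simp

lemma e_hasSum {q : ℕ} [NeZero q] (ψ : AddChar (ZMod q) ℂ) (hψ : ψ.IsPrimitive) (F : ZMod q → ℂ)
    (x : ℝ) (hx0 : 0 < x) (hx1 : x < 1) :
    HasSum (fun n : ℕ => F n / n * (x:ℂ) ^ n) 
      ((q:ℂ)⁻¹ * ∑ a, eHat ψ F a * (-Complex.log (1 - x * ψ a))) := by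
  have hq : (q:ℂ) ≠ 0 := by exact_mod_cast NeZero.ne q
  have h1 : ∀ a : ZMod q, HasSum (fun n : ℕ => eHat ψ F a * ((x * ψ a) ^ n / n))
      (eHat ψ F a * (-Complex.log (1 - x * ψ a))) := by
    intro a
    refine (Complex.hasSum_taylorSeries_neg_log ?_).mul_left _
    rw [norm_mul, AddChar.norm_apply, mul_one, Complex.norm_real, Real.norm_eq_abs, abs_of_pos hx0]
    exact hx1
  have h2 := (hasSum_sum (s := univ) (fun a _ => h1 a)).mul_left (q:ℂ)⁻¹
  have hfun : (fun n : ℕ => F n / n * (x:ℂ) ^ n) = fun n : ℕ => (q:ℂ)⁻¹ * ∑ a, eHat ψ F a * ((x * ψ a) ^ n / n) := ?_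
  · rw [hfun]; exact h2
  funext n
  have : ∀ a, eHat ψ F a * ((x * ψ a) ^ n / n) = (eHat ψ F a * ψ (a * (n : ZMod q))) * ((x:ℂ) ^ n / (n:ℂ)) := by
    intro a
    rw [mul_pow, ← AddChar.map_nsmul_eq_pow, nsmul_eq_mul, mul_comm (n : ZMod q) a]; ring
  simp_rw [this]
  rw [← Finset.sum_mul, e_inv ψ hψ]
  field_simp

lemma e_ne_one {q : ℕ} [NeZero q] {K : Type} [Field K] (ψ : AddChar (ZMod q) K) (hψ : ψ.IsPrimitive) (a : ZMod q)
    (ha : a ≠ 0) : ψ a ≠ 1 := by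
  intro h
  apply hψ ha
  ext y
  rw [AddChar.mulShift_apply, ← ZMod.natCast_zmod_val y, mul_comm, ← nsmul_eq_mul, 
    AddChar.map_nsmul_eq_pow, h]
  simp

lemma e_slit {q : ℕ} [NeZero q] (ψ : AddChar (ZMod q) ℂ) (hψ : ψ.IsPrimitive) (a : ZMod q)
    (ha : a ≠ 0) : 1 - ψ a ∈ Complex.slitPlane := by
  left
  have h1 := e_ne_one ψ hψ a ha
  have h2 : ‖ψ a‖ = 1 := AddChar.norm_apply ψ a
  have h3 : (ψ a).re ≤ 1 := h2 ▸ Complex.re_le_norm _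
  rcases h3.lt_or_eq with h | h
  · simp; linarith
  · exfalso; apply h1
    have h4 : (ψ a).re ^ 2 + (ψ a).im ^ 2 = 1 := by
      have := Complex.sq_norm (ψ a)
      rw [h2, Complex.normSq_apply] at this; nlinarith
    have h5 : (ψ a).im = 0 := by rw [h] at h4; nlinarith
    exact Complex.ext (by simpa using h) (by simpa using h5)

lemma e_tendsto {q : ℕ} [NeZero q] (ψ : AddChar (ZMod q) ℂ) (hψ : ψ.IsPrimitive) (F : ZMod q → ℂ) :
    Tendsto (fun x : ℝ => ∑ a ∈ univ.erase 0, eHat ψ F a * (-Complex.log (1 - x * ψ a))) (𝓝[<] 1)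
      (𝓝 (∑ a ∈ univ.erase 0, eHat ψ F a * (-Complex.log (1 - ψ a)))) := by
  refine tendsto_finsetSum _ fun a ha => ?_
  have hs := e_slit ψ hψ a (by simpa using ha)
  have h2 : ContinuousAt (fun x : ℝ => eHat ψ F a * (-Complex.log (1 - x * ψ a))) 1 := by
    refine ContinuousAt.mul continuousAt_const (ContinuousAt.neg (ContinuousAt.clog ?_ (by simpa using hs)))
    fun_prop
  have h3 := h2.tendsto.mono_left (nhdsWithin_le_nhds (s := Set.Iio 1))
  simpa using h3

lemma e_hat_zero {q : ℕ} [NeZero q] {K : Type} [Field K] (ψ : AddChar (ZMod q) K) (F : ZMod q → K) :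
    eHat ψ F 0 = ∑ b, F b := by simp [eHat]

lemma e_ev : ∀ᶠ x : ℝ in 𝓝[<] 1, 0 < x ∧ x < 1 := by
  filter_upwards [Ioo_mem_nhdsLT (zero_lt_one (α := ℝ))] with x hx using hx

/-- Abel limit equals the finite log expression for mean zero functions. -/
lemma e_abel {q : ℕ} [NeZero q] (ψ : AddChar (ZMod q) ℂ) (hψ : ψ.IsPrimitive) (F : ZMod q → ℂ)
    (h0 : ∑ b, F b = 0) :
    Tendsto (fun x : ℝ => ∑' n : ℕ, F n / n * (x:ℂ) ^ n) (𝓝[<] 1)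
      (𝓝 ((q:ℂ)⁻¹ * ∑ a ∈ univ.erase 0, eHat ψ F a * (-Complex.log (1 - ψ a)))) := by
  refine Tendsto.congr' ?_ ((e_tendsto ψ hψ F).const_mul _)
  filter_upwards [e_ev] with x hx
  rw [(e_hasSum ψ hψ F x hx.1 hx.2).tsum_eq, ← Finset.add_sum_erase _ _ (mem_univ 0), e_hat_zero, h0]
  simp

lemma e_mean_zero {q : ℕ} [NeZero q] (ψ : AddChar (ZMod q) ℂ) (hψ : ψ.IsPrimitive) (F : ZMod q → ℂ)
    (ℓ : ℂ) (h : Tendsto (fun x : ℝ => ∑' n : ℕ, F n / n * (x:ℂ) ^ n) (𝓝[<] 1) (𝓝 ℓ)) :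
    ∑ b, F b = 0 := by
  by_contra hne
  have hq : (q:ℂ) ≠ 0 := by exact_mod_cast NeZero.ne q
  have h1 : Tendsto (fun x : ℝ => Complex.log (1 - x)) (𝓝[<] 1) (𝓝 (-(∑ b, F b)⁻¹ * (q * ℓ - 
    ∑ a ∈ univ.erase 0, eHat ψ F a * (-Complex.log (1 - ψ a))))) := by
    refine Tendsto.congr' ?_ (((h.const_mul (q:ℂ)).sub (e_tendsto ψ hψ F)).const_mul (-(∑ b, F b)⁻¹))
    filter_upwards [e_ev] with x hx
    rw [(e_hasSum ψ hψ F x hx.1 hx.2).tsum_eq, ← Finset.add_sum_erase _ (fun a => eHat ψ F a * _) (mem_univ 0), e_hat_zero]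
    simp
    field_simp
    ring
  have h2 : Tendsto (fun x : ℝ => (Complex.log (1 - x)).re) (𝓝[<] 1) atBot := by
    have h3 : Tendsto (fun x : ℝ => 1 - x) (𝓝[<] 1) (𝓝[>] 0) := by
      refine tendsto_nhdsWithin_iff.mpr ⟨?_, ?_⟩
      · have : Tendsto (fun x : ℝ => 1 - x) (𝓝 1) (𝓝 (1 - 1)) := by
          exact (continuous_const.sub continuous_id).tendsto _
        simpa using this.mono_left nhdsWithin_le_nhds
      · filter_upwards [self_mem_nhdsWithin] with x hx
        simpa using hx
    refine Tendsto.congr' ?_ (Real.tendsto_log_nhdsGT_zero.comp h3)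
    filter_upwards [e_ev] with x hx
    rw [Complex.log_re]
    have : (1 - (x:ℂ)) = ((1 - x : ℝ) : ℂ) := by push_cast; rfl
    rw [this, Complex.norm_real, Real.norm_eq_abs, abs_of_pos (by linarith [hx.2])]
    rfl
  exact not_tendsto_nhds_of_tendsto_atBot h2 _ ((Complex.continuous_re.tendsto _).comp h1)

lemma e_conj0 {q : ℕ} [NeZero q] (K : Type) [Field K] [NumberField K] [Algebra ℚ K] [IsCyclotomicExtension {q} ℚ K] (f : ZMod q → ℤ)
    (h : Tendsto (fun x : ℝ => ∑' n : ℕ, ((f n : ℤ) : ℂ) / n * (x:ℂ) ^ n) (𝓝[<] 1) (𝓝 0)) :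
    (∑ b, (f b : ℂ) = 0) ∧ ∀ u : (ZMod q)ˣ, 
      Tendsto (fun x : ℝ => ∑' n : ℕ, ((f (u * (n : ZMod q)) : ℤ) : ℂ) / n * (x:ℂ) ^ n) (𝓝[<] 1) (𝓝 0) := by
  classical
  have hζ : IsPrimitiveRoot (IsCyclotomicExtension.zeta q ℚ K) q := IsCyclotomicExtension.zeta_spec q ℚ K
  set ζ := IsCyclotomicExtension.zeta q ℚ K
  set ψK := AddChar.zmodChar q hζ.pow_eq_one with hψK
  obtain ⟨σ⟩ : Nonempty (K →+* ℂ) := inferInstance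
  have hprimK : ψK.IsPrimitive := AddChar.zmodChar_primitive_of_primitive_root q hζ
  have hprim : ∀ φ : K →+* ℂ, ((φ : K →* ℂ).compAddChar ψK).IsPrimitive := by
    intro φ a ha hh
    apply hprimK ha
    ext y
    have := DFunLike.congr_fun hh y
    apply φ.injective
    simpa [AddChar.mulShift_apply] using this
  have hz : ∑ b, (f b : ℂ) = 0 := e_mean_zero _ (hprim σ) (fun b => (f b : ℂ)) 0 h
  refine ⟨hz, fun u => ?_⟩
  have hlim := e_abel _ (hprim σ) (fun b => (f b : ℂ)) hz
  have h0 := tendsto_nhds_unique hlim h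
  have hq : (q:ℂ) ≠ 0 := by exact_mod_cast NeZero.ne q
  have h1 := (mul_eq_zero.mp h0).resolve_left (inv_ne_zero hq)
  have hsub : ∀ g : ZMod q → ℂ, ∑ a ∈ univ.erase (0 : ZMod q), g a = ∑ a : {a : ZMod q // a ≠ 0}, g a := by
    intro g
    exact Finset.sum_subtype _ (by simp) g
  -- new embedding
  obtain ⟨σ', hσ'⟩ : ∃ σ' : K →+* ℂ, ∀ a, σ' (ψK a) = σ (ψK (a * (u⁻¹ : (ZMod q)ˣ))) := by
    have hp : IsPrimitiveRoot (σ (ψK ((u⁻¹ : (ZMod q)ˣ) : ZMod q))) q := by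
      rw [hψK, AddChar.zmodChar_apply, map_pow]
      exact (hζ.map_of_injective σ.injective).pow_of_coprime _ (ZMod.val_coe_unit_coprime _)
    let e := hζ.embeddingsEquivPrimitiveRoots ℂ (Polynomial.cyclotomic.irreducible_rat (NeZero.pos q))
    let z : primitiveRoots q ℂ := ⟨_, (mem_primitiveRoots (NeZero.pos q)).mpr hp⟩
    refine ⟨(e.symm z : K →ₐ[ℚ] ℂ), fun a => ?_⟩
    have h2 : (e.symm z) ζ = σ (ψK ((u⁻¹ : (ZMod q)ˣ) : ZMod q)) := by
      have := congrArg Subtype.val (e.apply_symm_apply z)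
      exact this
    have h3 : ψK a = ζ ^ a.val := AddChar.zmodChar_apply _ a
    have h4 : ψK (a * (u⁻¹ : (ZMod q)ˣ)) = ψK ((u⁻¹ : (ZMod q)ˣ) : ZMod q) ^ a.val := by
      rw [← AddChar.map_nsmul_eq_pow, nsmul_eq_mul, ZMod.natCast_zmod_val]
    rw [h3, h4, map_pow, map_pow, ← h2]
    rfl
  have h2 := bk_conj (ι := {a : ZMod q // a ≠ 0}) σ σ' (fun a => 1 - ψK a) 
    (fun a => eHat ψK (fun b => (f b : K)) a)
    (fun a => Complex.log (1 - σ (ψK a))) (fun a => by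
      rw [Complex.exp_log]
      · simp
      · exact Complex.slitPlane_ne_zero (e_slit _ (hprim σ) a a.2)) (by
      rw [hsub] at h1
      rw [← neg_eq_zero, ← h1, ← Finset.sum_neg_distrib]
      refine Finset.sum_congr rfl fun a _ => ?_
      simp [eHat])
  have h3 : ∑ b, ((f (u * b) : ℤ) : ℂ) = 0 := by
    rw [← hz]
    exact Fintype.sum_equiv (Units.mulLeft u) _ _ (fun b => by simp)
  have h4 := e_abel _ (hprim σ) (fun b => ((f (u * b) : ℤ) : ℂ)) h3
  convert h4 using 2
  rw [hsub]
  symm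
  rw [mul_eq_zero]; right
  rw [← neg_eq_zero, ← h2, ← Finset.sum_neg_distrib]
  refine Finset.sum_congr rfl fun a _ => ?_
  have : eHat ((σ : K →* ℂ).compAddChar ψK) (fun b => ((f (u * b) : ℤ) : ℂ)) a = 
      σ' (eHat ψK (fun b => (f b : K)) a) := by
    unfold eHat
    rw [map_sum]
    refine Fintype.sum_equiv (Units.mulLeft u) _ _ (fun b => ?_)
    simp only [map_mul, hσ', map_intCast, Units.mulLeft_apply]
    congr 1
    simp only [MonoidHom.coe_compAddChar, Function.comp_apply]
    change σ _ = σ _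
    congr 2
    have := u.mul_inv
    linear_combination ((a : ZMod q) * b) * this 
  rw [this]
  simp

lemma e_conj {q : ℕ} [NeZero q] (f : ZMod q → ℤ)
    (h : Tendsto (fun x : ℝ => ∑' n : ℕ, ((f n : ℤ) : ℂ) / n * (x:ℂ) ^ n) (𝓝[<] 1) (𝓝 0)) :
    (∑ b, (f b : ℂ) = 0) ∧ ∀ u : (ZMod q)ˣ, 
      Tendsto (fun x : ℝ => ∑' n : ℕ, ((f (u * (n : ZMod q)) : ℤ) : ℂ) / n * (x:ℂ) ^ n) (𝓝[<] 1) (𝓝 0) := by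
  have : NeZero ((q : ℕ) : ℚ) := ⟨by exact_mod_cast NeZero.ne q⟩
  exact @e_conj0 q _ (CyclotomicField q ℚ) _ _ (CyclotomicField.algebra q ℚ)
    (CyclotomicField.isCyclotomicExtension q ℚ) f h


lemma f_diff (k : ℕ) (s : ℝ) (h1 : 1 ≤ s) (h2 : s ≤ 2) :
    |((k+1:ℕ):ℝ) ^ (-s) - ((k+2:ℕ):ℝ) ^ (-s)| ≤ 2 / ((k+1:ℕ):ℝ)^2 := by
  set x : ℝ := ((k+1:ℕ):ℝ) with hx
  have hx1 : 1 ≤ x := by rw [hx]; push_cast; linarith [Nat.cast_nonneg (α := ℝ) k]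
  have e : ((k+2:ℕ):ℝ) = x + 1 := by rw [hx]; push_cast; ring
  rw [e]
  have hle : (x+1) ^ (-s) ≤ x ^ (-s) := 
    Real.rpow_le_rpow_of_nonpos (by linarith) (by linarith) (by linarith)
  rw [abs_of_nonneg (by linarith)]
  have hb := one_add_mul_self_le_rpow_one_add (s := -1/(x+1)) (by
    rw [le_div_iff₀ (by linarith)]; linarith) h1
  have e2 : 1 + -1/(x+1) = x / (x+1) := by field_simp; ring
  rw [e2, Real.div_rpow (by linarith) (by linarith)] at hb
  have hxs : 0 < x ^ s := Real.rpow_pos_of_pos (by linarith) _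
  have hxs1 : 0 < (x+1) ^ s := Real.rpow_pos_of_pos (by linarith) _
  have hxx : x ≤ x ^ s := by
    conv_lhs => rw [← Real.rpow_one x]
    exact Real.rpow_le_rpow_of_exponent_le hx1 h1
  rw [Real.rpow_neg (by linarith), Real.rpow_neg (by linarith)]
  have e3 : (x^s)⁻¹ - ((x+1)^s)⁻¹ = (x^s)⁻¹ * (1 - x^s/(x+1)^s) := by field_simp
  rw [e3]
  calc (x^s)⁻¹ * (1 - x^s/(x+1)^s) ≤ (x^s)⁻¹ * (s / (x+1)) := by
        gcongr
        have : s * (-1/(x+1)) = -(s/(x+1)) := by ring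
        linarith
    _ ≤ x⁻¹ * (2 / x) := by
        gcongr
        linarith
    _ = 2 / x^2 := by field_simp

lemma f_sum_range {q : ℕ} [NeZero q] (h : ZMod q → ℂ) : ∑ m ∈ range q, h (m : ZMod q) = ∑ x, h x := by
  refine Finset.sum_nbij' (fun m => (m : ZMod q)) (fun x => x.val) ?_ ?_ ?_ ?_ ?_
  · simp
  · intro x _; simpa using ZMod.val_lt x
  · intro m hm; exact ZMod.val_cast_of_lt (by simpa using hm)
  · intro x _; simp
  · simp

lemma f_bdd {q : ℕ} [NeZero q] (g : ZMod q → ℂ) (h0 : ∑ b, g b = 0) :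
    ∃ C : ℝ, ∀ N : ℕ, ‖∑ m ∈ range N, g ((m + 1 : ℕ) : ZMod q)‖ ≤ C := by
  have hper : Function.Periodic (fun N : ℕ => ∑ m ∈ range N, g ((m + 1 : ℕ) : ZMod q)) q := by
    intro N
    simp only
    rw [Finset.sum_range_add]
    have : ∑ x ∈ range q, g ((N + x + 1 : ℕ) : ZMod q) = 0 := by
      have h1 := f_sum_range (fun x : ZMod q => g (N + x + 1))
      simp only [Nat.cast_add, Nat.cast_one]
      rw [h1, ← h0]
      refine Fintype.sum_equiv (Equiv.addLeft ((N:ZMod q) + 1)) _ _ fun x => ?_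
      simp only [Equiv.coe_addLeft]; congr 1; ring
    rw [this, add_zero]
  refine ⟨∑ m ∈ range q, ‖g ((m + 1 : ℕ) : ZMod q)‖, fun N => ?_⟩
  have := hper.map_mod_nat N
  rw [← this]
  refine (norm_sum_le _ _).trans (Finset.sum_le_sum_of_subset_of_nonneg ?_ fun _ _ _ => norm_nonneg _)
  exact Finset.range_subset_range.mpr (Nat.mod_lt _ (NeZero.pos q)).le

lemma f_parts (g S : ℕ → ℂ) (hS : ∀ N, S N = ∑ m ∈ range N, g (m+1)) (c : ℕ → ℂ) (N : ℕ) :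
    ∑ m ∈ range N, g (m+1) * c (m+1) = S N * c (N+1) + 
      ∑ m ∈ range N, S (m+1) * (c (m+1) - c (m+2)) := by
  induction N with
  | zero => simp [hS]
  | succ N ih =>
    rw [Finset.sum_range_succ, ih, Finset.sum_range_succ]
    have : S (N+1) = S N + g (N+1) := by rw [hS, hS, Finset.sum_range_succ]
    rw [this]; ring

lemma f_test {q : ℕ} [NeZero q] (g : ZMod q → ℂ) (h0 : ∑ b, g b = 0) :
    ∃ ℓ : ℂ, Tendsto (fun N => ∑ n ∈ range N, g (n : ZMod q) / n) atTop (𝓝 ℓ) ∧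
      Tendsto (fun s : ℝ => ∑' n : ℕ, g (n : ZMod q) * (((n:ℝ) ^ (-s) : ℝ) : ℂ)) (𝓝[>] 1) (𝓝 ℓ) := by
  obtain ⟨C, hC⟩ := f_bdd g h0
  have hC0 : 0 ≤ C := (norm_nonneg _).trans (hC 0)
  set S : ℕ → ℂ := fun N => ∑ m ∈ range N, g ((m + 1 : ℕ) : ZMod q) with hS
  set c : ℝ → ℕ → ℂ := fun s n => (((n:ℝ) ^ (-s) : ℝ) : ℂ) with hc
  set t : ℝ → ℕ → ℂ := fun s m => S (m+1) * (c s (m+1) - c s (m+2)) with ht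
  have hbd : ∀ s, 1 ≤ s → s ≤ 2 → ∀ m, ‖t s m‖ ≤ C * (2 / ((m+1:ℕ):ℝ)^2) := by
    intro s h1 h2 m
    rw [ht]; simp only [norm_mul]
    gcongr
    · exact hC _
    · rw [hc]; simp only
      rw [← Complex.ofReal_sub, Complex.norm_real]
      exact f_diff m s h1 h2
  have hsum : Summable (fun m : ℕ => C * (2 / ((m+1:ℕ):ℝ)^2)) := by
    refine Summable.mul_left _ ?_
    have h1 : Summable (fun m : ℕ => 2 * (1 / (m:ℝ)^2)) := 
      (Real.summable_one_div_nat_pow.mpr one_lt_two).mul_left 2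
    have := (summable_nat_add_iff 1).mpr h1
    refine this.congr fun m => ?_
    ring
  have hlim : ∀ s, 1 ≤ s → s ≤ 2 → Tendsto (fun N => ∑ m ∈ range N, g ((m+1:ℕ):ZMod q) * c s (m+1)) atTop
      (𝓝 (∑' m, t s m)) := by
    intro s h1 h2
    have hst : Summable (t s) := Summable.of_norm_bounded hsum (hbd s h1 h2)
    have h3 : Tendsto (fun N => S N * c s (N+1)) atTop (𝓝 0) := by
      have h4 : Tendsto (fun N : ℕ => C * ((N+1:ℕ):ℝ) ^ (-s)) atTop (𝓝 (C * 0)) := by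
        refine Tendsto.const_mul _ ?_
        exact ((tendsto_rpow_neg_atTop (by linarith : 0 < s)).comp tendsto_natCast_atTop_atTop).comp
          (tendsto_add_atTop_nat 1)
      rw [mul_zero] at h4
      refine squeeze_zero_norm (fun N => ?_) h4
      rw [norm_mul]
      gcongr
      · exact hC N
      · rw [hc]; simp only
        rw [Complex.norm_real, Real.norm_eq_abs, abs_of_nonneg (by positivity)]
    have h5 := h3.add hst.hasSum.tendsto_sum_nat
    rw [zero_add] at h5
    refine h5.congr fun N => ?_
    exact (f_parts (fun n => g (n : ZMod q)) S (fun N => rfl) (c s) N).symm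
  refine ⟨∑' m, t 1 m, ?_, ?_⟩
  · have h1 := hlim 1 le_rfl one_le_two
    rw [← tendsto_add_atTop_iff_nat 1]
    refine h1.congr fun N => ?_
    rw [Finset.sum_range_succ' _ N]
    simp [hc, Real.rpow_neg_one, div_eq_mul_inv]
  · have hcont : Tendsto (fun s : ℝ => ∑' m, t s m) (𝓝[>] 1) (𝓝 (∑' m, t 1 m)) := by
      refine tendsto_tsum_of_dominated_convergence hsum (fun m => ?_) ?_
      · refine Tendsto.mono_left ?_ nhdsWithin_le_nhds
        have : ∀ n : ℕ, Tendsto (fun s => c s (n+1)) (𝓝 1) (𝓝 (c 1 (n+1))) := by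
          intro n
          refine (Complex.continuous_ofReal.tendsto _).comp ?_
          have : Continuous (fun s : ℝ => ((n+1:ℕ):ℝ) ^ (-s)) := by
            refine Continuous.rpow continuous_const continuous_neg fun s => ?_
            left; positivity
          exact this.tendsto 1
        exact ((this m).sub (this (m+1))).const_mul _
      · filter_upwards [Ioo_mem_nhdsGT (one_lt_two (α := ℝ))] with s hs
        exact hbd s hs.1.le hs.2.le
    refine hcont.congr' ?_
    filter_upwards [Ioo_mem_nhdsGT (one_lt_two (α := ℝ))] with s hs
    have hsu : Summable (fun n : ℕ => g (n : ZMod q) * c s n) := by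
      obtain ⟨M, hM⟩ : ∃ M : ℝ, ∀ x, ‖g x‖ ≤ M := by
        refine ⟨∑ x, ‖g x‖, fun x => ?_⟩
        exact Finset.single_le_sum (f := fun x => ‖g x‖) (fun _ _ => norm_nonneg _) (mem_univ x)
      refine Summable.of_norm_bounded ((Real.summable_nat_rpow.mpr (by linarith [hs.1] : -s < -1)).mul_left M) ?_
      intro n
      rw [norm_mul]
      refine mul_le_mul (hM _) ?_ (norm_nonneg _) ((norm_nonneg _).trans (hM 0))
      · rw [hc]; simp only
        rw [Complex.norm_real, Real.norm_eq_abs, abs_of_nonneg (by positivity)]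
    have h1 := (tendsto_add_atTop_iff_nat 1).mpr hsu.hasSum.tendsto_sum_nat
    have h2 : Tendsto (fun N => ∑ m ∈ range N, g ((m+1:ℕ):ZMod q) * c s (m+1)) atTop 
        (𝓝 (∑' n : ℕ, g (n : ZMod q) * c s n)) := by
      refine h1.congr fun N => ?_
      rw [Finset.sum_range_succ' _ N]
      have : c s 0 = 0 := by 
        rw [hc]; simp only
        rw [Nat.cast_zero, Real.zero_rpow (by linarith [hs.1])]; simp
      simp [this]
    exact tendsto_nhds_unique (hlim s hs.1.le hs.2.le) h2


lemma g_mem {q : ℕ} (hq : q ≠ 0) {r : ℕ} : r ∈ Nat.factoredNumbers q.primeFactors ↔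
    r ≠ 0 ∧ ∀ p, p.Prime → p ∣ r → p ∣ q := by
  rw [Nat.mem_factoredNumbers']
  constructor
  · intro h
    refine ⟨?_, fun p hp hpr => (Nat.mem_primeFactors.mp (h p hp hpr)).2.1⟩
    rintro rfl
    obtain ⟨p, hp, hp2⟩ := Nat.exists_infinite_primes (q+1)
    have := (Nat.mem_primeFactors.mp (h p hp2 (dvd_zero _))).2.1
    have := Nat.le_of_dvd (Nat.pos_of_ne_zero hq) this
    omega
  · rintro ⟨_, h⟩ p hp hpr
    exact Nat.mem_primeFactors.mpr ⟨hp, h p hp hpr, hq⟩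

lemma g_cop {q r m : ℕ} (hr : ∀ p, p.Prime → p ∣ r → p ∣ q) (hm : m.Coprime q) : r.Coprime m := by
  refine Nat.Coprime.symm (Nat.Coprime.symm ?_)
  rw [Nat.coprime_iff_gcd_eq_one]
  by_contra h
  obtain ⟨p, hp, hpd⟩ := Nat.exists_prime_and_dvd h
  have h1 := hr p hp (hpd.trans (Nat.gcd_dvd_left _ _))
  have h2 := hpd.trans (Nat.gcd_dvd_right _ _)
  exact Nat.not_coprime_of_dvd_of_dvd hp.one_lt h2 h1 hm

lemma g_inj {q : ℕ} (hq : q ≠ 0) : Function.Injective 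
    (fun c : Nat.factoredNumbers q.primeFactors × {m : ℕ | m.Coprime q ∧ m ≠ 0} => (c.1 : ℕ) * (c.2 : ℕ)) := by
  rintro ⟨⟨r, hr⟩, ⟨m, hm, hm0⟩⟩ ⟨⟨r', hr'⟩, ⟨m', hm', hm0'⟩⟩ h
  simp only at h
  rw [g_mem hq] at hr hr'
  have h1 : r ∣ r' := (g_cop hr.2 hm').dvd_of_dvd_mul_right (h ▸ dvd_mul_right r m)
  have h2 : r' ∣ r := (g_cop hr'.2 hm).dvd_of_dvd_mul_right (h ▸ dvd_mul_right r' m')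
  have h3 := Nat.dvd_antisymm h1 h2
  subst h3
  have h4 := Nat.eq_of_mul_eq_mul_left (Nat.pos_of_ne_zero hr.1) h
  subst h4
  rfl

lemma g_surj {q : ℕ} (hq : q ≠ 0) (n : ℕ) (hn : n ≠ 0) : ∃ r m, r ∈ Nat.factoredNumbers q.primeFactors ∧
    m.Coprime q ∧ n = r * m := by
  induction n using Nat.strong_induction_on with
  | _ n ih =>
    by_cases hc : n.Coprime q
    · exact ⟨1, n, by rw [g_mem hq]; refine ⟨one_ne_zero, fun p hp h => ?_⟩; exact absurd (Nat.dvd_one.mp h) hp.ne_one, hc, by simp⟩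
    · obtain ⟨p, hp, hpn, hpq⟩ := Nat.Prime.not_coprime_iff_dvd.mp hc
      obtain ⟨n', rfl⟩ := hpn
      have hn' : n' ≠ 0 := by rintro rfl; simp at hn
      obtain ⟨r, m, hr, hm, rfl⟩ := ih n' (by
        have := hp.two_le; nlinarith [Nat.pos_of_ne_zero hn']) hn'
      refine ⟨p * r, m, ?_, hm, by ring⟩
      rw [g_mem hq] at hr ⊢
      refine ⟨mul_ne_zero hp.ne_zero hr.1, fun p' hp' h => ?_⟩
      rcases hp'.dvd_mul.mp h with h | h
      · rwa [(Nat.prime_dvd_prime_iff_eq hp' hp).mp h]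
      · exact hr.2 p' hp' h

lemma g_summable (q : ℕ) : Summable (fun r : Nat.factoredNumbers q.primeFactors => ((r:ℕ):ℝ)⁻¹) ∧
    HasSum (fun r : Nat.factoredNumbers q.primeFactors => ((r:ℕ):ℝ)⁻¹) (∏ p ∈ q.primeFactors, (1 - (p:ℝ)⁻¹)⁻¹) := by
  have := EulerProduct.summable_and_hasSum_factoredNumbers_prod_filter_prime_geometric
    (f := (⟨⟨fun n : ℕ => (n:ℝ)⁻¹, by simp⟩, fun a b => by push_cast; rw [mul_inv]⟩ : ℕ →* ℝ)) (by
      intro p hp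
      simp only [MonoidHom.coe_mk, OneHom.coe_mk, norm_inv, Real.norm_natCast]
      exact inv_lt_one_of_one_lt₀ (by exact_mod_cast hp.one_lt)) q.primeFactors
  simp only [MonoidHom.coe_mk, OneHom.coe_mk] at this
  rw [Finset.filter_true_of_mem (fun p hp => Nat.prime_of_mem_primeFactors hp)] at this
  exact ⟨this.2.summable, this.2⟩

lemma g_bound {q : ℕ} [NeZero q] (g : ZMod q → ℂ) : ∃ M : ℝ, ∀ x, ‖g x‖ ≤ M := by
  refine ⟨∑ x, ‖g x‖, fun x => ?_⟩
  exact Finset.single_le_sum (f := fun x => ‖g x‖) (fun _ _ => norm_nonneg _) (mem_univ x)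

lemma g_cnorm (n : ℕ) (s : ℝ) : ‖(((n:ℝ) ^ (-s) : ℝ) : ℂ)‖ = (n:ℝ) ^ (-s) := by
  rw [Complex.norm_real, Real.norm_eq_abs, abs_of_nonneg (by positivity)]

lemma g_le (n : ℕ) (s : ℝ) (hs : 1 ≤ s) : (n:ℝ) ^ (-s) ≤ (n:ℝ)⁻¹ := by
  rcases Nat.eq_zero_or_pos n with rfl | hn
  · rw [Nat.cast_zero, Real.zero_rpow (by linarith)]; simp
  · rw [← Real.rpow_neg_one]
    exact Real.rpow_le_rpow_of_exponent_le (by exact_mod_cast hn) (by linarith)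

lemma g_prod {q : ℕ} [NeZero q] (χ : DirichletCharacter ℂ q) (g : ZMod q → ℂ)
    (hg : ∀ (u : (ZMod q)ˣ) x, g (u * x) = χ u * g x) (s : ℝ) (hs : 1 < s) :
    ∑' n : ℕ, g (n : ZMod q) * (((n:ℝ) ^ (-s) : ℝ) : ℂ) = 
      (∑' r : Nat.factoredNumbers q.primeFactors, g ((r:ℕ) : ZMod q) * ((((r:ℕ):ℝ) ^ (-s) : ℝ) : ℂ)) *
        DirichletCharacter.LFunction χ (s:ℂ) := by
  have hq : q ≠ 0 := NeZero.ne q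
  have hz : (((0:ℕ):ℝ) ^ (-s) : ℝ) = 0 := by rw [Nat.cast_zero, Real.zero_rpow (by linarith)]
  have hL : DirichletCharacter.LFunction χ (s:ℂ) = 
      ∑' m : {m : ℕ | m.Coprime q ∧ m ≠ 0}, χ ((m:ℕ) : ZMod q) * ((((m:ℕ):ℝ) ^ (-s) : ℝ) : ℂ) := by
    rw [DirichletCharacter.LFunction_eq_LSeries χ (by simpa using hs), LSeries]
    rw [tsum_subtype {m : ℕ | m.Coprime q ∧ m ≠ 0} (fun m : ℕ => χ (m : ZMod q) * (((m:ℝ) ^ (-s) : ℝ) : ℂ))]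
    refine tsum_congr fun n => ?_
    by_cases hn0 : n = 0
    · subst hn0; simp
    rw [LSeries.term_of_ne_zero hn0]
    by_cases hn : n.Coprime q
    · rw [Set.indicator_of_mem (by exact ⟨hn, hn0⟩), Complex.ofReal_cpow (by positivity)]
      push_cast
      rw [Complex.cpow_neg, div_eq_mul_inv]
    · rw [Set.indicator_of_notMem (fun h => hn h.1), χ.map_nonunit, zero_div]
      rwa [ZMod.isUnit_iff_coprime]
  rw [hL, tsum_mul_tsum_of_summable_norm]
  · rw [← (g_inj hq).tsum_eq (f := fun n : ℕ => g (n : ZMod q) * (((n:ℝ) ^ (-s) : ℝ) : ℂ))]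
    · refine tsum_congr fun c => ?_
      obtain ⟨⟨r, hr⟩, ⟨m, hm, hm0⟩⟩ := c
      simp only
      have h1 := hg (ZMod.unitOfCoprime m hm) (r : ZMod q)
      rw [ZMod.coe_unitOfCoprime] at h1
      rw [Nat.cast_mul, mul_comm (r : ZMod q), h1, Nat.cast_mul, Real.mul_rpow (by positivity) (by positivity)]
      push_cast; ring
    · intro n hn
      have hn0 : n ≠ 0 := by
        rintro rfl
        simp only [Function.mem_support, hz] at hn
        simp at hn
      obtain ⟨r, m, hr, hm, rfl⟩ := g_surj hq n hn0
      exact ⟨(⟨r, hr⟩, ⟨m, hm, by rintro rfl; simp at hn0⟩), rfl⟩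
  · obtain ⟨M, hM⟩ := g_bound g
    refine Summable.of_nonneg_of_le (fun _ => norm_nonneg _) (fun r => ?_) ((g_summable q).1.mul_left M)
    rw [norm_mul, g_cnorm]
    exact mul_le_mul (hM _) (g_le _ _ hs.le) (by positivity) ((norm_nonneg _).trans (hM 0))
  · have h1 : Summable (fun n : ℕ => (n:ℝ) ^ (-s)) := Real.summable_nat_rpow.mpr (by linarith)
    refine Summable.of_nonneg_of_le (fun _ => norm_nonneg _) (fun m => ?_) (h1.subtype {m : ℕ | m.Coprime q ∧ m ≠ 0})
    rw [norm_mul, g_cnorm]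
    exact mul_le_of_le_one_left (by positivity) (χ.norm_le_one _)

lemma g_zero {q : ℕ} [NeZero q] (χ : DirichletCharacter ℂ q) (g : ZMod q → ℂ)
    (hg : ∀ (u : (ZMod q)ˣ) x, g (u * x) = χ u * g x) 
    (h : Tendsto (fun s : ℝ => ∑' n : ℕ, g (n : ZMod q) * (((n:ℝ) ^ (-s) : ℝ) : ℂ)) (𝓝[>] 1) (𝓝 0)) :
    ∑' r : Nat.factoredNumbers q.primeFactors, g ((r:ℕ) : ZMod q) * ((((r:ℕ):ℝ)⁻¹ : ℝ) : ℂ) = 0 := by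
  have hev : ∀ᶠ s : ℝ in 𝓝[>] 1, 1 < s := self_mem_nhdsWithin
  have hR : Tendsto (fun s : ℝ => ∑' r : Nat.factoredNumbers q.primeFactors, 
      g ((r:ℕ) : ZMod q) * ((((r:ℕ):ℝ) ^ (-s) : ℝ) : ℂ)) (𝓝[>] 1) 
      (𝓝 (∑' r : Nat.factoredNumbers q.primeFactors, g ((r:ℕ) : ZMod q) * ((((r:ℕ):ℝ)⁻¹ : ℝ) : ℂ))) := by
    obtain ⟨M, hM⟩ := g_bound g
    refine tendsto_tsum_of_dominated_convergence ((g_summable q).1.mul_left M) (fun r => ?_) ?_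
    · refine Tendsto.const_mul _ ((Complex.continuous_ofReal.tendsto _).comp ?_)
      refine Tendsto.mono_left ?_ nhdsWithin_le_nhds
      have hr0 : ((r:ℕ):ℝ) ≠ 0 := by exact_mod_cast ((g_mem (NeZero.ne q)).mp r.2).1
      have : Continuous (fun s : ℝ => ((r:ℕ):ℝ) ^ (-s)) := 
        Continuous.rpow continuous_const continuous_neg fun s => Or.inl hr0
      have h2 := this.tendsto 1
      rwa [Real.rpow_neg_one] at h2
    · filter_upwards [hev] with s hs r
      rw [norm_mul, g_cnorm]
      exact mul_le_mul (hM _) (g_le _ _ hs.le) (by positivity) ((norm_nonneg _).trans (hM 0))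
  have hto : Tendsto (fun s : ℝ => (s:ℂ)) (𝓝[>] 1) (𝓝[≠] 1) := by
    refine tendsto_nhdsWithin_iff.mpr ⟨?_, ?_⟩
    · have := (Complex.continuous_ofReal.tendsto 1).mono_left (nhdsWithin_le_nhds (s := Set.Ioi (1:ℝ)))
      simpa using this
    · filter_upwards [hev] with s hs
      simp only [Set.mem_compl_iff, Set.mem_singleton_iff]
      exact_mod_cast hs.ne'
  by_cases hχ : χ = 1
  · have h1 := hR.mul (DirichletCharacter.LFunctionTrivChar_residue_one (N := q) |>.comp hto)
    have h2 : Tendsto (fun s : ℝ => ((s:ℂ) - 1) * ∑' n : ℕ, g (n : ZMod q) * (((n:ℝ) ^ (-s) : ℝ) : ℂ)) (𝓝[>] 1) (𝓝 0) := by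
      have h3 : Tendsto (fun s : ℝ => ((s:ℂ) - 1)) (𝓝[>] 1) (𝓝 (1 - 1)) := 
        (hto.mono_right nhdsWithin_le_nhds).sub_const 1
      simpa using h3.mul h
    have h4 := tendsto_nhds_unique (h1.congr' (by
      filter_upwards [hev] with s hs
      rw [g_prod χ g hg s hs, hχ]
      simp only [Function.comp_apply, DirichletCharacter.LFunctionTrivChar]
      ring)) h2
    refine (mul_eq_zero.mp h4).resolve_right ?_
    refine Finset.prod_ne_zero_iff.mpr fun p hp => ?_
    have hp1 := (Nat.prime_of_mem_primeFactors hp).one_lt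
    rw [sub_ne_zero]
    intro h5
    have : (p:ℂ) = 1 := inv_eq_one.mp h5.symm
    have : p = 1 := by exact_mod_cast this
    omega
  · have h1 : Tendsto (fun s : ℝ => DirichletCharacter.LFunction χ (s:ℂ)) (𝓝[>] 1) (𝓝 (DirichletCharacter.LFunction χ 1)) :=
      ((DirichletCharacter.differentiableAt_LFunction χ 1 (Or.inr hχ)).continuousAt.tendsto).comp 
        (hto.mono_right nhdsWithin_le_nhds)
    have h4 := tendsto_nhds_unique ((hR.mul h1).congr' (by
      filter_upwards [hev] with s hs
      rw [g_prod χ g hg s hs])) h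
    exact (mul_eq_zero.mp h4).resolve_right (DirichletCharacter.LFunction_apply_one_ne_zero hχ)


lemma h_main {q : ℕ} [NeZero q] (F : ZMod q → ℤ)
    (h : Tendsto (fun N => ∑ n ∈ range N, ((F (n : ZMod q) : ℤ) : ℂ) / n) atTop (𝓝 0)) :
    ∑' r : Nat.factoredNumbers q.primeFactors, ((F ((r:ℕ) : ZMod q) : ℤ) : ℂ) * ((((r:ℕ):ℝ)⁻¹ : ℝ) : ℂ) = 0 := by
  have habel : ∀ (G : ZMod q → ℂ) (ℓ : ℂ), Tendsto (fun N => ∑ n ∈ range N, G (n : ZMod q) / n) atTop (𝓝 ℓ) →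
      Tendsto (fun x : ℝ => ∑' n : ℕ, G n / n * (x:ℂ) ^ n) (𝓝[<] 1) (𝓝 ℓ) := by
    intro G ℓ hG
    have := Complex.tendsto_tsum_powerSeries_nhdsWithin_lt hG
    exact tendsto_map'_iff.mp this
  obtain ⟨h0, hu⟩ := e_conj F (habel (fun x => ((F x : ℤ) : ℂ)) 0 h)
  have hu0 : ∀ u : (ZMod q)ˣ, ∑ b, ((F (u * b) : ℤ) : ℂ) = 0 := by
    intro u
    rw [← h0]
    exact Fintype.sum_equiv (Units.mulLeft u) _ _ (fun b => by simp)
  have hup : ∀ u : (ZMod q)ˣ, Tendsto (fun N => ∑ n ∈ range N, ((F (u * (n : ZMod q)) : ℤ) : ℂ) / n) atTop (𝓝 0) := by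
    intro u
    obtain ⟨ℓ, h1, -⟩ := f_test (fun x : ZMod q => ((F (u * x) : ℤ) : ℂ)) (hu0 u)
    have h3 := habel (fun x : ZMod q => ((F ((u : ZMod q) * x) : ℤ) : ℂ)) ℓ h1
    have h4 := hu u
    have h2 : ℓ = 0 := tendsto_nhds_unique h3 h4
    rw [h2] at h1
    exact h1
  set g : DirichletCharacter ℂ q → ZMod q → ℂ := fun χ x => 
    ∑ u : (ZMod q)ˣ, χ ((u⁻¹ : (ZMod q)ˣ) : ZMod q) * ((F (u * x) : ℤ) : ℂ) with hg
  have hgmul : ∀ χ (u : (ZMod q)ˣ) x, g χ (u * x) = χ u * g χ x := by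
    intro χ u x
    rw [hg]; simp only
    rw [Finset.mul_sum]
    refine Fintype.sum_equiv (Equiv.mulRight u) _ _ fun v => ?_
    simp only [Equiv.coe_mulRight]
    rw [← mul_assoc (χ u), ← map_mul, ← Units.val_mul, ← mul_assoc (v : ZMod q), ← Units.val_mul]
    congr 3
    group
  have hgsum : ∀ χ, ∑ b, g χ b = 0 := by
    intro χ
    rw [hg]; simp only
    rw [Finset.sum_comm]
    refine Finset.sum_eq_zero fun u _ => ?_
    rw [← Finset.mul_sum, hu0, mul_zero]
  have hgp : ∀ χ, Tendsto (fun N => ∑ n ∈ range N, g χ (n : ZMod q) / n) atTop (𝓝 0) := by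
    intro χ
    have h1 : Tendsto (fun N => ∑ u : (ZMod q)ˣ, χ ((u⁻¹ : (ZMod q)ˣ) : ZMod q) * 
        ∑ n ∈ range N, ((F (u * (n : ZMod q)) : ℤ) : ℂ) / n) atTop (𝓝 (∑ u : (ZMod q)ˣ, χ ((u⁻¹ : (ZMod q)ˣ) : ZMod q) * 0)) :=
      tendsto_finsetSum _ fun u _ => (hup u).const_mul _
    simp only [mul_zero, Finset.sum_const_zero] at h1
    refine h1.congr fun N => ?_
    simp_rw [Finset.mul_sum]
    rw [Finset.sum_comm]
    refine Finset.sum_congr rfl fun n _ => ?_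
    rw [hg]; simp only
    rw [Finset.sum_div]
    refine Finset.sum_congr rfl fun u _ => ?_
    ring
  have hz : ∀ χ, ∑' r : Nat.factoredNumbers q.primeFactors, g χ ((r:ℕ) : ZMod q) * ((((r:ℕ):ℝ)⁻¹ : ℝ) : ℂ) = 0 := by
    intro χ
    obtain ⟨ℓ, h1, h2⟩ := f_test (g χ) (hgsum χ)
    have h3 := tendsto_nhds_unique h1 (hgp χ)
    rw [h3] at h2
    exact g_zero χ (g χ) (hgmul χ) h2
  have hsm : ∀ G : ZMod q → ℂ, Summable (fun r : Nat.factoredNumbers q.primeFactors => G ((r:ℕ) : ZMod q) * ((((r:ℕ):ℝ)⁻¹ : ℝ) : ℂ)) := by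
    intro G
    obtain ⟨M, hM⟩ := g_bound G
    refine Summable.of_norm_bounded ((g_summable q).1.mul_left M) fun r => ?_
    rw [norm_mul, Complex.norm_real, Real.norm_eq_abs, abs_of_nonneg (by positivity)]
    gcongr
    exact hM _
  have hsum : ∀ x, ∑ χ, g χ x = (q.totient : ℂ) * ((F x : ℤ) : ℂ) := by
    intro x
    rw [hg]; simp only
    rw [Finset.sum_comm]
    simp_rw [← Finset.sum_mul, DirichletCharacter.sum_characters_eq]
    rw [Finset.sum_eq_single 1]
    · simp
    · intro u _ hu
      rw [if_neg, zero_mul]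
      rw [Units.val_eq_one, inv_eq_one]; exact hu
    · simp
  have h1 : ∑' r : Nat.factoredNumbers q.primeFactors, ∑ χ, g χ ((r:ℕ) : ZMod q) * ((((r:ℕ):ℝ)⁻¹ : ℝ) : ℂ) = 0 := by
    rw [Summable.tsum_finsetSum fun χ _ => hsm (g χ)]
    exact Finset.sum_eq_zero fun χ _ => hz χ
  simp_rw [← Finset.sum_mul, hsum, mul_assoc] at h1
  rw [tsum_mul_left] at h1
  refine (mul_eq_zero.mp h1).resolve_left ?_
  have := Nat.totient_pos.mpr (NeZero.pos q)
  exact_mod_cast this.ne'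

lemma h_bound (q k : ℕ) (hk : q.primeFactors.card = k) (h : 2 ^ k < q.minFac) :
    ∏ p ∈ q.primeFactors, (1 - (p:ℝ)⁻¹)⁻¹ < 2 := by
  have h2k : (0:ℝ) < 2 ^ k := by positivity
  have h1 : ∏ p ∈ q.primeFactors, (1 - (p:ℝ)⁻¹)⁻¹ ≤ ∏ p ∈ q.primeFactors, Real.exp ((2 ^ k)⁻¹) := by
    refine Finset.prod_le_prod (fun p hp => ?_) fun p hp => ?_
    · have hp1 := (Nat.prime_of_mem_primeFactors hp).one_lt
      have : (p:ℝ)⁻¹ ≤ 1 := inv_le_one_of_one_le₀ (by exact_mod_cast hp1.le)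
      exact inv_nonneg.mpr (by linarith)
    · have hp1 := Nat.minFac_le_of_dvd (Nat.prime_of_mem_primeFactors hp).two_le (Nat.dvd_of_mem_primeFactors hp)
      have hp2 : (2:ℝ) ^ k + 1 ≤ p := by exact_mod_cast (by omega : 2 ^ k + 1 ≤ p)
      refine le_trans ?_ (Real.add_one_le_exp _)
      have hp0 : (0:ℝ) < p := by linarith
      have e : 1 - (p:ℝ)⁻¹ = (p - 1) / p := by field_simp
      rw [e, inv_div, div_le_iff₀ (by linarith)]
      have : ((2:ℝ)^k)⁻¹ * 2^k = 1 := inv_mul_cancel₀ h2k.ne'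
      have h3 : 0 < ((2:ℝ)^k)⁻¹ := by positivity
      nlinarith
  rw [Finset.prod_const, hk, ← Real.exp_nat_mul] at h1
  have h3 : (k:ℝ) * (2 ^ k)⁻¹ ≤ 1/2 := by
    rw [← div_eq_mul_inv, div_le_iff₀ h2k]
    have : 2 * k ≤ 2 ^ k := by
      rcases k with _ | j
      · simp
      · have := Nat.lt_two_pow_self (n := j)
        rw [pow_succ]; omega
    have : (2:ℝ) * k ≤ 2 ^ k := by exact_mod_cast this
    linarith
  refine h1.trans_lt ((Real.exp_le_exp.mpr h3).trans_lt ?_)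
  have h4 := Real.exp_one_lt_d9
  have h5 : Real.exp 1 = Real.exp (1/2) * Real.exp (1/2) := by rw [← Real.exp_add]; norm_num
  have h6 := Real.exp_pos (1/2 : ℝ)
  nlinarith

lemma h_periodic {q : ℕ} [NeZero q] (hq : 1 < q) (f : ℕ → ℤ) (hf : IsErdosian q f) (n : ℕ) (hn : 1 ≤ n) :
    f n = if (n : ZMod q) = 0 then 0 else f (n : ZMod q).val := by
  obtain ⟨h1, h2, h3⟩ := hf
  split_ifs with h
  · exact h3 n hn ((ZMod.natCast_eq_zero_iff n q).mp h)
  · rw [ZMod.val_natCast]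
    have hd : ¬ q ∣ n := fun hd => h ((ZMod.natCast_eq_zero_iff n q).mpr hd)
    have hm : 1 ≤ n % q := Nat.one_le_iff_ne_zero.mpr fun h0 => hd (Nat.dvd_of_mod_eq_zero h0)
    have : ∀ k, f (n % q + q * k) = f (n % q) := by
      intro k
      induction k with
      | zero => simp
      | succ k ih => rw [mul_add, mul_one, ← add_assoc, h1 _ (by omega), ih]
    conv_lhs => rw [← Nat.mod_add_div n q]
    exact this _

theorem erdos_true_squarefree_minFac_gt_two_pow (q : ℕ) (hq : 1 < q) (hodd : Odd q)
    (hsf : Squarefree q) (k : ℕ) (hk : q.primeFactors.card = k)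
    (h : 2 ^ k < q.minFac) :
    ErdosConjectureHolds q := by
  rintro ⟨f, hf, hlim⟩
  have : NeZero q := ⟨by omega⟩
  have : Fact (1 < q) := ⟨hq⟩
  set F : ZMod q → ℤ := fun x => if x = 0 then 0 else f x.val with hF
  have hFf : ∀ n : ℕ, 1 ≤ n → f n = F (n : ZMod q) := fun n hn => h_periodic hq f hf n hn
  have hF0 : F 0 = 0 := by simp [hF]
  have hF1 : ∀ x, |F x| ≤ 1 := by
    intro x
    by_cases hx : x = 0
    · rw [hx, hF0]; simp
    · have hv : x.val ≠ 0 := by simpa using hx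
      have : F x = f x.val := by simp [hF, hx]
      rw [this]
      rcases hf.2.1 x.val (Nat.one_le_iff_ne_zero.mpr hv) (fun hd => by
        have := Nat.le_of_dvd (Nat.pos_of_ne_zero hv) hd
        have := ZMod.val_lt x
        omega) with h | h <;> rw [h] <;> simp
  have hF11 : |F 1| = 1 := by
    have h1 := hFf 1 le_rfl
    rw [Nat.cast_one] at h1
    rw [← h1]
    rcases hf.2.1 1 le_rfl (fun hd => by
      have := Nat.le_of_dvd one_pos hd
      omega) with h | h <;> rw [h] <;> simp
  have hT := h_main F (by
    rw [← tendsto_add_atTop_iff_nat 1]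
    have h1 := (Complex.continuous_ofReal.tendsto 0).comp hlim
    rw [Complex.ofReal_zero] at h1
    refine h1.congr fun N => ?_
    simp only [Function.comp_apply]
    rw [Finset.sum_range_succ']
    have e : Finset.Icc 1 N = (Finset.range N).image (fun i => i + 1) := by
      ext x; simp only [Finset.mem_Icc, Finset.mem_image, Finset.mem_range]
      constructor
      · intro h; exact ⟨x - 1, by omega, by omega⟩
      · rintro ⟨y, hy, rfl⟩; omega
    rw [e, Finset.sum_image (by intro a _ b _ hab; simpa using hab)]
    push_cast
    simp only [Nat.cast_zero, div_zero, add_zero]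
    refine Finset.sum_congr rfl fun n _ => ?_
    rw [hFf (n+1) (by omega)]
    push_cast; rfl)
  have hsum := g_summable q
  have h1mem : (1:ℕ) ∈ Nat.factoredNumbers q.primeFactors := by
    rw [g_mem (by omega)]
    exact ⟨one_ne_zero, fun p hp hd => absurd (Nat.dvd_one.mp hd) hp.ne_one⟩
  set b : Nat.factoredNumbers q.primeFactors → ℝ := fun r => ((r:ℕ):ℝ)⁻¹ with hb
  set a : Nat.factoredNumbers q.primeFactors → ℂ := fun r => 
    ((F ((r:ℕ) : ZMod q) : ℤ) : ℂ) * ((((r:ℕ):ℝ)⁻¹ : ℝ) : ℂ) with ha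
  have hab : ∀ r, ‖a r‖ ≤ b r := by
    intro r
    rw [ha, hb]; simp only
    rw [norm_mul, Complex.norm_real, Real.norm_eq_abs, abs_of_nonneg (by positivity : 0 ≤ ((r:ℕ):ℝ)⁻¹),
      Complex.norm_intCast]
    refine mul_le_of_le_one_left (by positivity) ?_
    exact_mod_cast hF1 _
  have hbS : Summable b := hsum.1
  have haS : Summable a := Summable.of_norm_bounded hbS hab
  set o : Nat.factoredNumbers q.primeFactors := ⟨1, h1mem⟩ with ho
  have hb1 : b o = 1 := by simp [hb, ho]
  have ha1 : ‖a o‖ = 1 := by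
    rw [ha]; simp only [ho]
    rw [norm_mul, Complex.norm_intCast]
    simp only [Nat.cast_one, inv_one, Complex.ofReal_one, norm_one, mul_one]
    exact_mod_cast hF11
  classical
  have hta := haS.tsum_eq_add_tsum_ite o
  have htb := hbS.tsum_eq_add_tsum_ite o
  rw [hT] at hta
  rw [hsum.2.tsum_eq, hb1] at htb
  have hbS' : Summable (fun r => if r = o then 0 else b r) := by
    refine Summable.of_nonneg_of_le (fun r => ?_) (fun r => ?_) hbS
    · split_ifs
      · exact le_rfl
      · rw [hb]; positivity
    · split_ifs
      · rw [hb]; positivity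
      · exact le_rfl
  have hle : ‖∑' r, (if r = o then 0 else a r)‖ ≤ ∑' r, (if r = o then 0 else b r) := by
    refine tsum_of_norm_bounded hbS'.hasSum fun r => ?_
    split_ifs
    · simp
    · exact hab r
  have he : ∑' r, (if r = o then 0 else a r) = - a o := by linear_combination -hta
  rw [he, norm_neg, ha1] at hle
  have := h_bound q k hk h
  linarith
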